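/- arXiv:2512.11595 — 16 statements merged into one kernel-verified Lean document; each statement's English description precedes it below -/
import Mathlib

section
/- For every real number x > 0 and every t ∈ (0,1) and every ε > 0, there exists a finite sequence (a_1,…,a_k) of positive integers such that |[a_1,…,a_k]_x − t| < ε. In other words, the set of values of finite x-continued fractions with positive integer digits is dense in (0,1). -/
/-!
The maps `f_a(y) = x / (x + (a - 1) + y)`, `a ≥ 1`, send `[0, 1]` onto intervals that cover `(0, 1]`
(`exists_digit`), so every `t` can be expanded digit by digit. A single `f_a` need not be a
contraction when `x < 1` (its slope at `0` is `-1/x` for `a = 1`), but the composition of two of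
them is: it is a Möbius map of determinant `x ^ 2` whose denominator is at least `x ^ 2 + x` on
`[0, ∞)`, hence it is Lipschitz with constant `1 / (1 + x) ^ 2 < 1` (`two_step_contraction`).
Expanding `t` to `2n` digits therefore approximates it within `(1 / (1 + x) ^ 2) ^ n`.
-/

/-- The x-continued-fraction value of a finite digit sequence:
`[a_k]_x = x/(x + a_k - 1)` and `[a, rest]_x = x/(x + (a-1) + [rest]_x)`,
realized by setting the value of the empty sequence to `0`. -/
noncomputable def cfVal (x : ℝ) : List ℕ → ℝ
  | [] => 0
  | a :: l => x / (x + ((a : ℝ) - 1) + cfVal x l)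

lemma cfVal_nonneg {x : ℝ} (hx : 0 < x) (l : List ℕ) (hl : ∀ a ∈ l, 0 < a) :
    0 ≤ cfVal x l := by
  induction l with
  | nil => simp [cfVal]
  | cons a l ih =>
    have h := ih fun b hb => hl b (List.mem_cons_of_mem _ hb)
    have ha : (1 : ℝ) ≤ a := by exact_mod_cast hl a List.mem_cons_self
    simp only [cfVal]
    exact div_nonneg hx.le (by linarith)

/-- The images of `[0, 1]` under the maps `y ↦ x / (x + (a - 1) + y)` cover `(0, 1]`: the digit is
`⌊x / t - x⌋ + 1` and the remainder is the fractional part of `x / t - x`. -/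
lemma exists_digit {x t : ℝ} (hx : 0 < x) (ht0 : 0 < t) (ht1 : t ≤ 1) :
    ∃ a : ℕ, 0 < a ∧ ∃ y : ℝ, 0 ≤ y ∧ y ≤ 1 ∧ t = x / (x + ((a : ℝ) - 1) + y) := by
  have hs : 0 ≤ x / t - x := by
    have : x ≤ x / t := by rw [le_div_iff₀ ht0]; nlinarith
    linarith
  refine ⟨⌊x / t - x⌋₊ + 1, Nat.succ_pos _, x / t - x - ⌊x / t - x⌋₊, ?_, ?_, ?_⟩
  · linarith [Nat.floor_le hs]
  · linarith [Nat.lt_floor_add_one (x / t - x)]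
  · have h : x + (((⌊x / t - x⌋₊ + 1 : ℕ) : ℝ) - 1) + (x / t - x - ⌊x / t - x⌋₊) = x / t := by
      push_cast
      ring
    rw [h]
    field_simp

lemma two_step_contraction {x A B z w : ℝ} (hx : 0 < x) (hA : x ≤ A) (hB : x ≤ B)
    (hz : 0 ≤ z) (hw : 0 ≤ w) :
    |x / (A + x / (B + z)) - x / (A + x / (B + w))| ≤ 1 / (1 + x) ^ 2 * |z - w| := by
  have hBz : 0 < B + z := by linarith
  have hBw : 0 < B + w := by linarith
  have hA0 : 0 < A := by linarith
  have h1 : x * (1 + x) ≤ A * (B + z) + x := by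
    nlinarith [mul_le_mul hA (by linarith : x ≤ B + z) hx.le hA0.le]
  have h2 : x * (1 + x) ≤ A * (B + w) + x := by
    nlinarith [mul_le_mul hA (by linarith : x ≤ B + w) hx.le hA0.le]
  have hp : 0 < x * (1 + x) := by positivity
  have p1 := hp.trans_le h1
  have p2 := hp.trans_le h2
  have e1 : x / (A + x / (B + z)) = x * (B + z) / (A * (B + z) + x) := by field_simp
  have e2 : x / (A + x / (B + w)) = x * (B + w) / (A * (B + w) + x) := by field_simp
  have e : x / (A + x / (B + z)) - x / (A + x / (B + w))
      = x ^ 2 / ((A * (B + z) + x) * (A * (B + w) + x)) * (z - w) := by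
    rw [e1, e2, div_sub_div _ _ p1.ne' p2.ne', div_mul_eq_mul_div]
    congr 1
    ring
  rw [e, abs_mul, abs_of_pos (by positivity)]
  refine mul_le_mul_of_nonneg_right ?_ (abs_nonneg _)
  rw [div_le_div_iff₀ (by positivity) (by positivity)]
  calc x ^ 2 * (1 + x) ^ 2 = (x * (1 + x)) * (x * (1 + x)) := by ring
    _ ≤ (A * (B + z) + x) * (A * (B + w) + x) := mul_le_mul h1 h2 hp.le p1.le
    _ = 1 * ((A * (B + z) + x) * (A * (B + w) + x)) := by ring

/-- The list may be empty or shorter than `2 * n`: the expansion of `t` stops early when a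
remainder vanishes. -/
lemma exists_approx {x : ℝ} (hx : 0 < x) (n : ℕ) :
    ∀ t : ℝ, 0 ≤ t → t ≤ 1 →
      ∃ l : List ℕ, (∀ a ∈ l, 0 < a) ∧ |cfVal x l - t| ≤ (1 / (1 + x) ^ 2) ^ n := by
  have hc : 0 < 1 / (1 + x) ^ 2 := by positivity
  induction n with
  | zero =>
    intro t h0 h1
    refine ⟨[], by simp, ?_⟩
    simp [cfVal, abs_of_nonneg h0, h1]
  | succ n ih =>
    intro t h0 h1
    rcases h0.eq_or_lt with rfl | h0
    · exact ⟨[], by simp, by simpa [cfVal] using (pow_pos hc (n + 1)).le⟩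
    obtain ⟨a, ha, y, hy0, hy1, rfl⟩ := exists_digit hx h0 h1
    rcases hy0.eq_or_lt with rfl | hy0
    · exact ⟨[a], by simpa using ha, by simpa [cfVal] using (pow_pos hc (n + 1)).le⟩
    obtain ⟨b, hb, z, hz0, hz1, rfl⟩ := exists_digit hx hy0 hy1
    obtain ⟨l, hl, hlz⟩ := ih z hz0 hz1
    refine ⟨a :: b :: l, by simpa [ha, hb] using hl, ?_⟩
    have ha' : (1 : ℝ) ≤ a := by exact_mod_cast ha
    have hb' : (1 : ℝ) ≤ b := by exact_mod_cast hb
    simp only [cfVal]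
    refine (two_step_contraction hx (by linarith) (by linarith) (cfVal_nonneg hx l hl) hz0).trans ?_
    rw [pow_succ' (1 / (1 + x) ^ 2) n]
    exact mul_le_mul_of_nonneg_left hlz hc.le

/-- The set of values of finite x-continued fractions with positive integer digits
is dense in (0,1). -/
theorem stmt0 (x : ℝ) (hx : 0 < x) (t : ℝ) (ht : t ∈ Set.Ioo (0 : ℝ) 1)
    (ε : ℝ) (hε : 0 < ε) :
    ∃ l : List ℕ, l ≠ [] ∧ (∀ a ∈ l, 0 < a) ∧ |cfVal x l - t| < ε := by
  obtain ⟨ht0, ht1⟩ := ht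
  have hc : 1 / (1 + x) ^ 2 < 1 := by
    rw [div_lt_one (by positivity)]
    nlinarith
  -- An error below `t` rules out the empty list, whose value is `0`.
  obtain ⟨n, hn⟩ := exists_pow_lt_of_lt_one (lt_min hε ht0) hc
  obtain ⟨l, hl, h⟩ := exists_approx hx n t ht0.le ht1.le
  have h' := h.trans_lt hn
  refine ⟨l, ?_, hl, h'.trans_le (min_le_left _ _)⟩
  rintro rfl
  have h2 := h'.trans_le (min_le_right _ _)
  simp [cfVal, abs_of_pos ht0] at h2
end

section
/- For every real number x > 0, the map sending a finite sequence of positive integers whose last entry is at least 2 to its x-continued-fraction value is injective: if (a_1,…,a_k) and (b_1,…,b_m) are finite sequences of positive integers with a_k ≥ 2 and b_m ≥ 2 and [a_1,…,a_k]_x = [b_1,…,b_m]_x, then k = m and a_i = b_i for all i. -/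
/-- A digit sequence with positive digits whose last digit, if there is one, is not `1`.
The empty sequence is allowed, so that the notion is inherited by tails. -/
def Admissible (l : List ℕ) : Prop :=
  (∀ i ∈ l, 0 < i) ∧ l.getLast? ≠ some 1

lemma Admissible.tail {a : ℕ} {l : List ℕ} (h : Admissible (a :: l)) : Admissible l := by
  refine ⟨fun i hi => h.1 i (List.mem_cons_of_mem _ hi), ?_⟩
  cases l with
  | nil => simp
  | cons b m => simpa [List.getLast?_cons_cons] using h.2

lemma cfVal_bounds {x : ℝ} (hx : 0 < x) (l : List ℕ) (hl : Admissible l) :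
    0 ≤ cfVal x l ∧ cfVal x l < 1 ∧ (l ≠ [] → 0 < cfVal x l) := by
  induction l with
  | nil => simp [cfVal]
  | cons a l ih =>
    obtain ⟨h0, -, hpos⟩ := ih hl.tail
    have ha : (1 : ℝ) ≤ a := by exact_mod_cast hl.1 a (by simp)
    -- The upper bound is strict because either the digit exceeds `1` or a nonempty tail follows.
    have hgt : (0 : ℝ) < (a - 1) + cfVal x l := by
      cases l with
      | nil =>
        have h1 : a ≠ 1 := by simpa using hl.2
        have h2 : 0 < a := hl.1 a (by simp)
        have h3 : (2 : ℝ) ≤ a := by exact_mod_cast (by omega : 2 ≤ a)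
        linarith
      | cons b m =>
        have := hpos (by simp)
        linarith
    have hd : 0 < x + ((a : ℝ) - 1) + cfVal x l := by linarith
    have hv : 0 < cfVal x (a :: l) := div_pos hx hd
    refine ⟨hv.le, ?_, fun _ => hv⟩
    rw [cfVal, div_lt_one hd]
    linarith

lemma cfVal_inj {x : ℝ} (hx : 0 < x) (a b : List ℕ) (ha : Admissible a) (hb : Admissible b)
    (h : cfVal x a = cfVal x b) : a = b := by
  induction a generalizing b with
  | nil =>
    by_contra hne
    have := (cfVal_bounds hx b hb).2.2 (Ne.symm hne)
    rw [← h] at this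
    simp [cfVal] at this
  | cons n l ih =>
    cases b with
    | nil =>
      have := (cfVal_bounds hx _ ha).2.2 (by simp)
      rw [h] at this
      simp [cfVal] at this
    | cons m k =>
      obtain ⟨hl0, hl1, -⟩ := cfVal_bounds hx l ha.tail
      obtain ⟨hk0, hk1, -⟩ := cfVal_bounds hx k hb.tail
      have hn : (1 : ℝ) ≤ n := by exact_mod_cast ha.1 n (by simp)
      have hm : (1 : ℝ) ≤ m := by exact_mod_cast hb.1 m (by simp)
      have hdn : 0 < x + ((n : ℝ) - 1) + cfVal x l := by linarith
      have hdm : 0 < x + ((m : ℝ) - 1) + cfVal x k := by linarith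
      have hsum : (n : ℝ) + cfVal x l = m + cfVal x k := by
        rw [cfVal, cfVal, div_eq_div_iff hdn.ne' hdm.ne'] at h
        have := mul_left_cancel₀ hx.ne' h
        linarith
      have hnm : n = m := by
        have h1 : (n : ℝ) < m + 1 := by linarith
        have h2 : (m : ℝ) < n + 1 := by linarith
        have h1' : n < m + 1 := by exact_mod_cast h1
        have h2' : m < n + 1 := by exact_mod_cast h2
        omega
      subst hnm
      rw [ih k ha.tail hb.tail (by linarith)]

/-- For every x > 0, the map from finite sequences of positive integers with last
entry at least 2 to their x-continued-fraction value is injective. -/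
theorem stmt1 (x : ℝ) (hx : 0 < x) (a b : List ℕ)
    (ha : a ≠ []) (hb : b ≠ [])
    (hapos : ∀ i ∈ a, 0 < i) (hbpos : ∀ i ∈ b, 0 < i)
    (halast : 2 ≤ a.getLast ha) (hblast : 2 ≤ b.getLast hb)
    (h : cfVal x a = cfVal x b) : a = b := by
  refine cfVal_inj hx a b ⟨hapos, ?_⟩ ⟨hbpos, ?_⟩ h
  · rw [List.getLast?_eq_some_getLast ha]
    simp only [ne_eq, Option.some.injEq]
    omega
  · rw [List.getLast?_eq_some_getLast hb]
    simp only [ne_eq, Option.some.injEq]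
    omega
end

section
/- Let x be a positive integer. Then for every rational number r ∈ (0,1) there exists a finite sequence (a_1,…,a_k) of positive integers with a_k ≥ 2 such that [a_1,…,a_k]_x = r. Consequently (together with injectivity), evaluating the Farey polynomial tree at a positive integer x gives a bijection between vertices of the tree and ℚ ∩ (0,1). -/
/-- One step of the expansion, with `v = s / p` the value of the remaining digits. -/
lemma step_value {x p q d s : ℕ} (hx : 0 < x) (hp : 0 < p) (hq : 0 < q) (hd : x ≤ d)
    (h : p * d + s = x * q) {v : ℝ} (hv : v = (s : ℝ) / p) :
    (x : ℝ) / (x + (((d - x + 1 : ℕ) : ℝ) - 1) + v) = (p : ℝ) / q := by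
  have hx' : (x : ℝ) ≠ 0 := by positivity
  have hp' : (p : ℝ) ≠ 0 := by positivity
  have hq' : (q : ℝ) ≠ 0 := by positivity
  have h' : (p : ℝ) * d + s = x * q := by exact_mod_cast h
  have key : (x : ℝ) + (((d - x + 1 : ℕ) : ℝ) - 1) + v = x * q / p := by
    rw [hv, ← h']
    push_cast [Nat.cast_sub hd]
    field_simp
    ring
  rw [key]
  field_simp

lemma exists_digits (x : ℕ) (hx : 0 < x) (q : ℕ) :
    ∀ p : ℕ, 0 < p → p < q → ∃ l : List ℕ, ∃ hl : l ≠ [],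
      (∀ a ∈ l, 0 < a) ∧ 2 ≤ l.getLast hl ∧ cfVal (x : ℝ) l = (p : ℝ) / q := by
  induction q using Nat.strong_induction_on with
  | _ q ih =>
    intro p hp hpq
    have hdiv : p * (x * q / p) + x * q % p = x * q := Nat.div_add_mod _ _
    have hs : x * q % p < p := Nat.mod_lt _ hp
    have hd : x ≤ x * q / p := (Nat.le_div_iff_mul_le hp).2 (Nat.mul_le_mul_left x hpq.le)
    generalize x * q / p = d at *
    generalize x * q % p = s at *
    rcases Nat.eq_zero_or_pos s with rfl | hs0
    · have hlt : x < d := by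
        have : x * p < x * q := Nat.mul_lt_mul_of_pos_left hpq hx
        by_contra! hc
        nlinarith
      refine ⟨[d - x + 1], by simp, by simp, by simp; omega, ?_⟩
      exact step_value hx hp (hp.trans hpq) hd hdiv (by simp [cfVal])
    · obtain ⟨l, hl, hpos, hlast, hval⟩ := ih p hpq s hs0 hs
      refine ⟨(d - x + 1) :: l, by simp, ?_, ?_, ?_⟩
      · intro a ha
        rcases List.mem_cons.1 ha with rfl | ha
        · omega
        · exact hpos a ha
      · rwa [List.getLast_cons hl]
      · exact step_value hx hp (hp.trans hpq) hd hdiv hval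

/-- For a positive integer x, every rational in (0,1) is the x-continued-fraction
value of a finite sequence of positive integers with last entry at least 2. -/
theorem stmt2 (x : ℕ) (hx : 0 < x) (r : ℚ) (hr0 : 0 < r) (hr1 : r < 1) :
    ∃ l : List ℕ, ∃ hl : l ≠ [],
      (∀ a ∈ l, 0 < a) ∧ 2 ≤ l.getLast hl ∧ cfVal (x : ℝ) l = (r : ℝ) := by
  have hn : 0 < r.num := Rat.num_pos.2 hr0
  have hlt : r.num < r.den := Rat.num_lt_denom_iff.2 hr1
  obtain ⟨l, hl, hpos, hlast, hval⟩ :=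
    exists_digits x hx r.den r.num.toNat (by omega) (by omega)
  refine ⟨l, hl, hpos, hlast, hval.trans ?_⟩
  have hc : ((r.num.toNat : ℕ) : ℝ) = (r.num : ℝ) := by
    exact_mod_cast congrArg (Int.cast : ℤ → ℝ) (Int.toNat_of_nonneg hn.le)
  rw [hc, Rat.cast_def]
end

section
/- Let x be a positive rational number. Then every rational number t ∈ (0,1) has a finite x-continued-fraction expansion — that is, for every rational t ∈ (0,1) there exists n ∈ ℕ with T_x^n(t) = 0 — if and only if x is a positive integer. -/
/-!
If `x = m` is an integer and `t = a / b`, then `T_x t = ((m * b) mod a) / a`: the numerator strictly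
decreases, so the orbit reaches `0` (`exists_iterate_eq_zero`).

If `x` is not an integer, choose a prime `p` dividing its denominator, so that `|x|_p > 1`.
Whenever `|t|_p > 1`, the ultrametric inequality gives `|x / t - x|_p = |x|_p > 1`, and subtracting
an integer does not change this. Hence `|T_x t|_p > 1` (`one_lt_padicNorm_step`), so the orbit of
`t = 1 / p` never meets `0`.
-/

/-- The x-Gauss map `T_x(t) = (x/t - x) - ⌊x/t - x⌋` for `t ≠ 0`, with `T_x(0) = 0`. -/
noncomputable def Tmap (x : ℝ) (t : ℝ) : ℝ := if t = 0 then 0 else Int.fract (x / t - x)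

theorem exists_iterate_eq_zero (m a b : ℕ) :
    ∃ n : ℕ, (Tmap (m : ℝ))^[n] ((a : ℝ) / b) = 0 := by
  induction a using Nat.strong_induction_on generalizing b with
  | _ a ih =>
    by_cases hab : (a : ℝ) / b = 0
    · exact ⟨0, hab⟩
    have ha : a ≠ 0 := by rintro rfl; simp at hab
    obtain ⟨n, hn⟩ := ih (m * b % a) (Nat.mod_lt _ (Nat.pos_of_ne_zero ha)) a
    refine ⟨n + 1, ?_⟩
    have hstep : Tmap (m : ℝ) ((a : ℝ) / b) = ((m * b % a : ℕ) : ℝ) / a := by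
      rw [Tmap, if_neg hab, Int.fract_sub_natCast, ← Int.fract_div_natCast_eq_div_natCast_mod,
        div_div_eq_mul_div]
      push_cast
      rfl
    rw [Function.iterate_succ_apply, hstep, hn]

theorem one_lt_padicNorm_sub_int (p : ℕ) [Fact p.Prime] {s : ℚ} (hs : 1 < padicNorm p s) (k : ℤ) :
    1 < padicNorm p (s - k) := by
  have hk := padicNorm.of_int (p := p) k
  have h : padicNorm p s ≤ max (padicNorm p (s - k)) (padicNorm p k) := by
    simpa using padicNorm.nonarchimedean (p := p) (q := s - k) (r := k)
  rcases le_max_iff.1 h with h | h <;> linarith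

theorem one_lt_padicNorm_step (p : ℕ) [Fact p.Prime] {x t : ℚ} (hx : 1 < padicNorm p x)
    (ht : 1 < padicNorm p t) : 1 < padicNorm p (Int.fract (x / t - x)) := by
  apply one_lt_padicNorm_sub_int
  have hlt : padicNorm p (x / t) < padicNorm p x := by
    rw [padicNorm.div]
    exact div_lt_self (by linarith) ht
  have h : padicNorm p x ≤ max (padicNorm p (x / t)) (padicNorm p (x / t - x)) := by
    simpa using padicNorm.sub (p := p) (q := x / t) (r := x / t - x)
  rcases le_max_iff.1 h with h | h <;> linarith

theorem iterate_padicNorm (p : ℕ) [Fact p.Prime] {x t : ℚ} (hx : 1 < padicNorm p x)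
    (ht : 1 < padicNorm p t) (n : ℕ) :
    ∃ s : ℚ, (Tmap (x : ℝ))^[n] (t : ℝ) = s ∧ 1 < padicNorm p s := by
  induction n with
  | zero => exact ⟨t, rfl, ht⟩
  | succ n ih =>
    obtain ⟨s, hs, hs1⟩ := ih
    refine ⟨Int.fract (x / s - x), ?_, one_lt_padicNorm_step p hx hs1⟩
    have hs0 : (s : ℝ) ≠ 0 := by
      rintro h
      rw [Rat.cast_eq_zero] at h
      norm_num [h] at hs1
    rw [Function.iterate_succ_apply', hs, Tmap, if_neg hs0, Rat.cast_fract]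
    push_cast
    rfl

theorem one_lt_padicNorm_of_dvd_den (p : ℕ) [hp : Fact p.Prime] {x : ℚ} (h : p ∣ x.den) :
    1 < padicNorm p x := by
  have hnum : padicNorm p x.num = 1 := by
    rw [padicNorm.int_eq_one_iff]
    intro hd
    exact Nat.not_coprime_of_dvd_of_dvd hp.out.one_lt (Int.natCast_dvd.1 hd) h x.reduced
  have hden : padicNorm p x.den < 1 := (padicNorm.nat_lt_one_iff _).2 h
  have hpos : 0 < padicNorm p x.den :=
    lt_of_le_of_ne (padicNorm.nonneg _) (padicNorm.nonzero (by simp)).symm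
  rw [← Rat.num_div_den x, padicNorm.div, hnum]
  exact one_lt_one_div hpos hden

/-- For a positive rational x, every rational in (0,1) has a finite x-continued-fraction
expansion if and only if x is a positive integer. -/
theorem stmt3 (x : ℚ) (hx : 0 < x) :
    (∀ t : ℚ, 0 < t → t < 1 → ∃ n : ℕ, (Tmap (x : ℝ))^[n] (t : ℝ) = 0) ↔
      ∃ m : ℕ, 0 < m ∧ x = m := by
  constructor
  · intro H
    by_cases hd : x.den = 1
    · have hnum : 0 < x.num := Rat.num_pos.2 hx
      refine ⟨x.num.toNat, by omega, ?_⟩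
      have hcast : ((x.num.toNat : ℤ) : ℚ) = x.num := by rw [Int.toNat_of_nonneg hnum.le]
      rw [← Int.cast_natCast, hcast]
      exact (Rat.coe_int_num_of_den_eq_one hd).symm
    · exfalso
      obtain ⟨p, hp, hpd⟩ := Nat.exists_prime_and_dvd hd
      have : Fact p.Prime := ⟨hp⟩
      have hp1 : (1 : ℚ) < p := by exact_mod_cast hp.one_lt
      obtain ⟨n, hn⟩ := H (p : ℚ)⁻¹ (by positivity) (inv_lt_one_of_one_lt₀ hp1)
      have ht : 1 < padicNorm p (p : ℚ)⁻¹ := by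
        rw [← one_div, padicNorm.div, padicNorm.one, padicNorm.padicNorm_p_of_prime]
        simpa using hp1
      obtain ⟨s, hs, hs1⟩ := iterate_padicNorm p (one_lt_padicNorm_of_dvd_den p hpd) ht n
      have hs0 : s = 0 := by exact_mod_cast hs.symm.trans hn
      norm_num [hs0] at hs1
  · rintro ⟨m, -, rfl⟩ t ht -
    obtain ⟨n, hn⟩ := exists_iterate_eq_zero m t.num.toNat t.den
    refine ⟨n, ?_⟩
    have hcast : ((t.num.toNat : ℕ) : ℝ) = (t.num : ℝ) := by
      rw [← Int.cast_natCast, Int.toNat_of_nonneg (Rat.num_pos.2 ht).le]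
    rw [hcast, ← Rat.cast_def] at hn
    simpa using hn
end

section
/- Let x = p/q where p, q are coprime positive integers with q ≥ 2. Let t = a/b ∈ (0,1) be a rational number with a, b positive integers such that q divides b and q does not divide a. Then T_x^n(t) ≠ 0 for every n ∈ ℕ; that is, t has an infinite x-continued-fraction expansion. -/
/-- `t` is a (not necessarily reduced) fraction of integers whose denominator is a nonzero multiple
of `q` and whose numerator is not a multiple of `q`. -/
def IsQFrac (q : ℕ) (t : ℝ) : Prop :=
  ∃ A B : ℤ, B ≠ 0 ∧ ¬ (q : ℤ) ∣ A ∧ t = (A : ℝ) / (q * B)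

lemma IsQFrac.ne_zero {q : ℕ} (hq : 0 < q) {t : ℝ} (h : IsQFrac q t) : t ≠ 0 := by
  obtain ⟨A, B, hB, hA, rfl⟩ := h
  have hA0 : A ≠ 0 := fun h => hA (h ▸ dvd_zero _)
  have hq' : (q : ℝ) ≠ 0 := by positivity
  have hA' : (A : ℝ) ≠ 0 := by exact_mod_cast hA0
  have hB' : (B : ℝ) ≠ 0 := by exact_mod_cast hB
  positivity

lemma IsQFrac.tmap {p q : ℕ} (hq : 0 < q) (hcop : Nat.Coprime p q) {t : ℝ} (h : IsQFrac q t) :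
    IsQFrac q (Tmap ((p : ℝ) / q) t) := by
  have ht := h.ne_zero hq
  obtain ⟨A, B, hB, hA, rfl⟩ := h
  have hA0 : A ≠ 0 := fun h => hA (h ▸ dvd_zero _)
  have hq' : (q : ℝ) ≠ 0 := by positivity
  have hA' : (A : ℝ) ≠ 0 := by exact_mod_cast hA0
  have hB' : (B : ℝ) ≠ 0 := by exact_mod_cast hB
  rw [Tmap, if_neg ht, Int.fract]
  generalize ⌊(p : ℝ) / q / (A / (q * B)) - p / q⌋ = k
  refine ⟨p * q * B - p * A - k * q * A, A, hA0, fun hd => hA ?_, ?_⟩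
  · have hpA : (q : ℤ) ∣ p * A := by
      have h2 : (q : ℤ) ∣ q * (p * B - k * A) := dvd_mul_right _ _
      have h3 := dvd_sub h2 hd
      ring_nf at h3
      exact h3
    exact (Nat.isCoprime_iff_coprime.mpr hcop.symm).dvd_of_dvd_mul_left hpA
  · push_cast
    field_simp

/-- For x = p/q with p, q coprime positive integers, q ≥ 2, and t = a/b ∈ (0,1) with
q ∣ b and q ∤ a, the orbit of t under T_x never hits 0: t has an infinite x-expansion. -/
theorem stmt4 (p q a b : ℕ) (hp : 0 < p) (hq : 2 ≤ q) (hcop : Nat.Coprime p q)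
    (ha : 0 < a) (hab : a < b)
    (hqb : q ∣ b) (hqa : ¬ q ∣ a) :
    ∀ n : ℕ, (Tmap ((p : ℝ) / q))^[n] ((a : ℝ) / b) ≠ 0 := by
  have hq0 : 0 < q := by omega
  have key : ∀ n : ℕ, IsQFrac q ((Tmap ((p : ℝ) / q))^[n] ((a : ℝ) / b)) := by
    intro n
    induction n with
    | zero =>
      obtain ⟨c, rfl⟩ := hqb
      have hc : c ≠ 0 := by
        rintro rfl
        omega
      exact ⟨a, c, by exact_mod_cast hc, by exact_mod_cast hqa, by simp⟩
    | succ n ih =>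
      rw [Function.iterate_succ_apply']
      exact ih.tmap hq0 hcop
  exact fun n => (key n).ne_zero hq0
end

section
/- Let (p₀,q₀) be any vertex of the Farey polynomial tree, and let R = { α ∈ ℝ : there is a pair (p,q) obtained from (p₀,q₀) by finitely many applications of Φ0 and Φ1 with q(α) = 0 }. Then R is dense in the interval (−∞,−1]. -/
/-!
Write a vertex as `(X * P, Q)` when the first entry vanishes at `0` and as `(P, Q)` otherwise, and
follow the ratio `t = Q / P` at a real point `x`.  On vertices of the first kind `Φ1` acts by
`t ↦ t + 1`, and `Φ0` twice acts by `t ↦ x + t / (t + 1)`, both staying in the first kind; this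
uses that the constant term of `Q` never vanishes, because all coefficients are nonnegative.

Suppose no denominator below `(p₀, q₀)` vanishes on `[x₁, x₂]`, where `x₁ < x₂ ≤ -1`.  By the
intermediate value theorem each of them has the same sign at `x₁` and `x₂`, hence so have the
ratios `t₁` and `t₂` (`BState.mul_pos`).  Applying `Φ1` many times and then `Φ0` twice gives
ratios close to `x₁ + 1` and `x₂ + 1`, both negative and with `t₁ ≤ t₂`.
From negative ratios, some power of `Φ1` shifts `t₁` into `(-1, 0)`, and then also `t₂` by
equality of signs, so `|t₂ - t₁| < 1`.  Since `s ↦ s / (s + 1)` does not decrease distances on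
`(-1, 0)`, applying `Φ0` twice more increases `t₂ - t₁` by at least `x₂ - x₁`
(`BState.expand`).  Iterating contradicts the bound `t₂ - t₁ < 1`.
-/

open Polynomial

/-- The map Φ0 on pairs of integer polynomials. -/
noncomputable def Phi0 (pq : Polynomial ℤ × Polynomial ℤ) : Polynomial ℤ × Polynomial ℤ :=
  if pq.1.coeff 0 ≠ 0 then (X * pq.2, X * pq.2 + pq.1)
  else (pq.2, pq.2 + pq.1.divX)

/-- The map Φ1 on pairs of integer polynomials. -/
noncomputable def Phi1 (pq : Polynomial ℤ × Polynomial ℤ) : Polynomial ℤ × Polynomial ℤ :=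
  if pq.1.coeff 0 ≠ 0 then (X * pq.1, X * pq.2 + pq.1)
  else (pq.1, pq.2 + pq.1.divX)

/-- One step in the Farey polynomial tree: apply Φ0 or Φ1. -/
def FareyStep (u v : Polynomial ℤ × Polynomial ℤ) : Prop := v = Phi0 u ∨ v = Phi1 u

/-- A vertex of the Farey polynomial tree: reachable from the root (X, X+1) by
finitely many applications of Φ0 and Φ1. -/
def IsFareyVertex (pq : Polynomial ℤ × Polynomial ℤ) : Prop :=
  Relation.ReflTransGen FareyStep (X, X + 1) pq

/-- Evaluation of an integer polynomial at a real number, as a ring homomorphism. -/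
noncomputable def ev (x : ℝ) : ℤ[X] →+* ℝ := eval₂RingHom (Int.castRingHom ℝ) x

lemma ev_eq (x : ℝ) (p : ℤ[X]) : (p.map (Int.castRingHom ℝ)).eval x = ev x p := by
  simp [ev, eval_map]

@[simp] lemma ev_X (x : ℝ) : ev x X = x := by simp [ev]

/-- Both entries have nonnegative coefficients, and the constant term of the second is positive. -/
def CoeffNonneg (u : ℤ[X] × ℤ[X]) : Prop :=
  (∀ n, 0 ≤ u.1.coeff n) ∧ (∀ n, 0 ≤ u.2.coeff n) ∧ 0 < u.2.coeff 0

lemma coeff_X_mul_nonneg {p : ℤ[X]} (h : ∀ n, 0 ≤ p.coeff n) (n : ℕ) : 0 ≤ (X * p).coeff n := by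
  cases n with
  | zero => simp
  | succ n => simpa using h n

lemma CoeffNonneg.step {u v : ℤ[X] × ℤ[X]} (hu : CoeffNonneg u) (h : FareyStep u v) : CoeffNonneg v := by
  obtain ⟨h1, h2, h3⟩ := hu
  have hX1 := coeff_X_mul_nonneg h1
  have hX2 := coeff_X_mul_nonneg h2
  by_cases hc : u.1.coeff 0 = 0
  · have hq : (∀ n, 0 ≤ (u.2 + u.1.divX).coeff n) ∧ 0 < (u.2 + u.1.divX).coeff 0 := by
      refine ⟨fun n => ?_, ?_⟩
      · rw [coeff_add, coeff_divX]
        exact add_nonneg (h2 n) (h1 _)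
      · rw [coeff_add, coeff_divX]
        exact add_pos_of_pos_of_nonneg h3 (h1 _)
    rcases h with rfl | rfl
    · unfold Phi0 CoeffNonneg
      rw [if_neg (not_not.mpr hc)]
      exact ⟨h2, hq⟩
    · unfold Phi1 CoeffNonneg
      rw [if_neg (not_not.mpr hc)]
      exact ⟨h1, hq⟩
  · have hq : (∀ n, 0 ≤ (X * u.2 + u.1).coeff n) ∧ 0 < (X * u.2 + u.1).coeff 0 := by
      refine ⟨fun n => ?_, ?_⟩
      · rw [coeff_add]
        exact add_nonneg (hX2 n) (h1 n)
      · have := h1 0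
        simp only [coeff_add, mul_coeff_zero, coeff_X_zero, zero_mul, zero_add]
        omega
    rcases h with rfl | rfl
    · unfold Phi0 CoeffNonneg
      rw [if_pos hc]
      exact ⟨hX2, hq⟩
    · unfold Phi1 CoeffNonneg
      rw [if_pos hc]
      exact ⟨hX1, hq⟩

lemma CoeffNonneg.trans {u v : ℤ[X] × ℤ[X]} (hu : CoeffNonneg u) (h : Relation.ReflTransGen FareyStep u v) :
    CoeffNonneg v := by
  induction h with
  | refl => exact hu
  | tail _ hs ih => exact ih.step hs

lemma coeffNonneg_root : CoeffNonneg (X, X + 1) := by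
  refine ⟨fun n => ?_, fun n => ?_, by simp⟩
  · simp only [coeff_X]
    split_ifs <;> norm_num
  · simp only [coeff_add, coeff_X, coeff_one]
    split_ifs <;> norm_num

lemma divX_X_mul (P : ℤ[X]) : (X * P).divX = P := by
  ext n
  rw [coeff_divX, coeff_X_mul]

lemma phi0_X_mul (P Q : ℤ[X]) : Phi0 (X * P, Q) = (Q, Q + P) := by
  simp [Phi0, divX_X_mul]

lemma phi1_X_mul (P Q : ℤ[X]) : Phi1 (X * P, Q) = (X * P, Q + P) := by
  simp [Phi1, divX_X_mul]

lemma phi0_of_ne {P Q : ℤ[X]} (h : P.coeff 0 ≠ 0) : Phi0 (P, Q) = (X * Q, X * Q + P) :=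
  if_pos h

/-- Some vertex `(X * P, Q)` below `u` has ratio `Q / P` equal to `t₁` at `x₁` and to `t₂` at
`x₂`, with `P` nonzero and of the same sign at both points. -/
def BState (u : ℤ[X] × ℤ[X]) (x₁ x₂ t₁ t₂ : ℝ) : Prop :=
  ∃ P Q : ℤ[X], Relation.ReflTransGen FareyStep u (X * P, Q) ∧ 0 < ev x₁ P * ev x₂ P ∧
    ev x₁ Q = t₁ * ev x₁ P ∧ ev x₂ Q = t₂ * ev x₂ P

/-- No denominator below `u` vanishes at `x₁` or `x₂` or has different signs there. -/
def SameSign (u : ℤ[X] × ℤ[X]) (x₁ x₂ : ℝ) : Prop :=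
  ∀ v, Relation.ReflTransGen FareyStep u v → 0 < ev x₁ v.2 * ev x₂ v.2

section

variable {u : ℤ[X] × ℤ[X]} {x₁ x₂ t₁ t₂ : ℝ}

lemma BState.mul_pos (hs : SameSign u x₁ x₂) (hb : BState u x₁ x₂ t₁ t₂) : 0 < t₁ * t₂ := by
  obtain ⟨P, Q, hr, hP, h1, h2⟩ := hb
  have := hs _ hr
  simp only [h1, h2] at this
  rw [show t₁ * ev x₁ P * (t₂ * ev x₂ P) = t₁ * t₂ * (ev x₁ P * ev x₂ P) by ring] at this
  exact pos_of_mul_pos_left this hP.le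

lemma BState.add_one (hb : BState u x₁ x₂ t₁ t₂) : BState u x₁ x₂ (t₁ + 1) (t₂ + 1) := by
  obtain ⟨P, Q, hr, hP, h1, h2⟩ := hb
  refine ⟨P, Q + P, hr.tail (Or.inr (phi1_X_mul P Q).symm), hP, ?_, ?_⟩
  · rw [map_add, h1]; ring
  · rw [map_add, h2]; ring

lemma BState.add_nat (hb : BState u x₁ x₂ t₁ t₂) (n : ℕ) :
    BState u x₁ x₂ (t₁ + n) (t₂ + n) := by
  induction n with
  | zero => simpa using hb
  | succ n ih =>
    have := ih.add_one
    simpa [add_assoc] using this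

/-- The effect of two applications of `Phi0` on the ratios. -/
lemma BState.phi0_phi0 (hu : CoeffNonneg u) (hs : SameSign u x₁ x₂) (hb : BState u x₁ x₂ t₁ t₂) :
    BState u x₁ x₂ (x₁ + t₁ / (t₁ + 1)) (x₂ + t₂ / (t₂ + 1)) := by
  have hpos := hb.add_one.mul_pos hs
  have ht1 : t₁ + 1 ≠ 0 := left_ne_zero_of_mul hpos.ne'
  have ht2 : t₂ + 1 ≠ 0 := right_ne_zero_of_mul hpos.ne'
  obtain ⟨P, Q, hr, hP, h1, h2⟩ := hb
  have hQ : Q.coeff 0 ≠ 0 := (hu.trans hr).2.2.ne'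
  have hr' : Relation.ReflTransGen FareyStep u (Q, Q + P) :=
    hr.tail (Or.inl (phi0_X_mul P Q).symm)
  refine ⟨Q + P, X * (Q + P) + Q, hr'.tail (Or.inl (phi0_of_ne hQ).symm), hs _ hr', ?_, ?_⟩
  · simp only [map_add, map_mul, ev_X, h1]
    field_simp
  · simp only [map_add, map_mul, ev_X, h2]
    field_simp

lemma exists_bState (hu : CoeffNonneg u) (hs : SameSign u x₁ x₂) : ∃ t₁ t₂, BState u x₁ x₂ t₁ t₂ := by
  -- Below every vertex there is one of the form `(X * P, Q)` where `P` is itself a denominator.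
  have key : ∃ P Q : ℤ[X], Relation.ReflTransGen FareyStep u (X * P, Q) ∧
      0 < ev x₁ P * ev x₂ P := by
    have hA : ∀ P Q : ℤ[X], P.coeff 0 ≠ 0 → Relation.ReflTransGen FareyStep u (P, Q) →
        ∃ P Q : ℤ[X], Relation.ReflTransGen FareyStep u (X * P, Q) ∧
          0 < ev x₁ P * ev x₂ P := fun P Q hP hr =>
      ⟨Q, _, hr.tail (Or.inl (phi0_of_ne hP).symm), hs _ hr⟩
    obtain ⟨p, q⟩ := u
    by_cases hp : p.coeff 0 = 0
    · obtain ⟨P, rfl⟩ := X_dvd_iff.mpr hp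
      exact hA q (q + P) hu.2.2.ne' (.single (Or.inl (phi0_X_mul P q).symm))
    · exact hA p q hp .refl
  obtain ⟨P, Q, hr, hP⟩ := key
  have h1 : ev x₁ P ≠ 0 := left_ne_zero_of_mul hP.ne'
  have h2 : ev x₂ P ≠ 0 := right_ne_zero_of_mul hP.ne'
  exact ⟨ev x₁ Q / ev x₁ P, ev x₂ Q / ev x₂ P, P, Q, hr, hP, by field_simp, by field_simp⟩

lemma exists_bState_neg (hu : CoeffNonneg u) (hs : SameSign u x₁ x₂) (hx : x₁ < x₂) (hx2 : x₂ ≤ -1) :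
    ∃ t₁ t₂, BState u x₁ x₂ t₁ t₂ ∧ t₁ < 0 ∧ t₂ < 0 ∧ t₁ ≤ t₂ := by
  obtain ⟨t₁, t₂, hb⟩ := exists_bState hu hs
  -- For large `n` the new ratios `xᵢ + 1 - 1 / (tᵢ + n + 1)` are ordered as the `xᵢ`.
  obtain ⟨n, hn⟩ := exists_nat_gt (|t₁| + |t₂| + 1 / (x₂ - x₁))
  have hδ : 0 < x₂ - x₁ := sub_pos.mpr hx
  have hδ' : 0 < 1 / (x₂ - x₁) := by positivity
  have a1 := neg_abs_le t₁
  have a2 := neg_abs_le t₂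
  have b1 := abs_nonneg t₁
  have b2 := abs_nonneg t₂
  have c1 : 0 < t₁ + n + 1 := by linarith
  have c2 : 0 < t₂ + n + 1 := by linarith
  have e1 : x₁ + (t₁ + n) / (t₁ + n + 1) = x₁ + 1 - 1 / (t₁ + n + 1) := by field_simp; ring
  have e2 : x₂ + (t₂ + n) / (t₂ + n + 1) = x₂ + 1 - 1 / (t₂ + n + 1) := by field_simp; ring
  have d1 : 0 < 1 / (t₁ + n + 1) := by positivity
  have d2 : 0 < 1 / (t₂ + n + 1) := by positivity
  have d3 : 1 / (t₂ + n + 1) ≤ x₂ - x₁ := by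
    rw [one_div_le c2 hδ]
    linarith
  have := (hb.add_nat n).phi0_phi0 hu hs
  rw [e1, e2] at this
  exact ⟨_, _, this, by linarith, by linarith, by linarith⟩

/-- Negative ratios can be shifted into `(-1, 0)` by a common integer. -/
lemma BState.exists_shift (hs : SameSign u x₁ x₂) (hb : BState u x₁ x₂ t₁ t₂) (h1 : t₁ < 0) :
    ∃ n : ℕ, (-1 < t₁ + n ∧ t₁ + n < 0) ∧ (-1 < t₂ + n ∧ t₂ + n < 0) := by
  -- `n + 1` is the first shift making `t₁` nonnegative.
  have hfl : 0 < ⌈-t₁⌉₊ := Nat.ceil_pos.mpr (by linarith)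
  obtain ⟨n, hn⟩ := Nat.exists_eq_succ_of_ne_zero hfl.ne'
  have hle : -t₁ ≤ (n + 1 : ℝ) := by
    have := Nat.le_ceil (-t₁)
    rw [hn] at this
    exact_mod_cast this
  have hlt : (n : ℝ) < -t₁ := Nat.lt_ceil.mp (by omega)
  have p0 := (hb.add_nat n).mul_pos hs
  have p1 := (hb.add_nat n).add_one.mul_pos hs
  have q1 : 0 < t₁ + n + 1 :=
    lt_of_le_of_ne (by linarith) (left_ne_zero_of_mul p1.ne').symm
  have q2 : 0 < t₂ + n + 1 := (pos_iff_pos_of_mul_pos p1).mp q1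
  have q3 : t₂ + n < 0 := (neg_iff_neg_of_mul_pos p0).mp (by linarith)
  exact ⟨n, ⟨by linarith, by linarith⟩, by linarith, q3⟩

lemma BState.expand (hu : CoeffNonneg u) (hs : SameSign u x₁ x₂) (hx : x₁ < x₂) (hx2 : x₂ ≤ -1)
    (hb : BState u x₁ x₂ t₁ t₂) (h1 : t₁ < 0) (hle : t₁ ≤ t₂) :
    ∃ t₁' t₂', BState u x₁ x₂ t₁' t₂' ∧ t₁' < 0 ∧ t₂' < 0 ∧
      (x₂ - x₁) + (t₂ - t₁) ≤ t₂' - t₁' := by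
  obtain ⟨n, ⟨l1, r1⟩, l2, r2⟩ := hb.exists_shift hs h1
  have hb' := (hb.add_nat n).phi0_phi0 hu hs
  set s₁ := t₁ + n with hs1
  set s₂ := t₂ + n with hs2
  have c1 : 0 < s₁ + 1 := by linarith
  have c2 : 0 < s₂ + 1 := by linarith
  have n1 : s₁ / (s₁ + 1) < 0 := div_neg_of_neg_of_pos r1 c1
  have n2 : s₂ / (s₂ + 1) < 0 := div_neg_of_neg_of_pos r2 c2
  have e : s₂ / (s₂ + 1) - s₁ / (s₁ + 1) = (s₂ - s₁) / ((s₁ + 1) * (s₂ + 1)) := by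
    field_simp; ring
  have d : s₂ - s₁ = t₂ - t₁ := by rw [hs1, hs2]; ring
  have f : s₂ - s₁ ≤ (s₂ - s₁) / ((s₁ + 1) * (s₂ + 1)) :=
    le_div_self (by linarith) (by positivity) (by nlinarith)
  exact ⟨_, _, hb', by linarith, by linarith, by linarith⟩

lemma not_sameSign (hu : CoeffNonneg u) (hx : x₁ < x₂) (hx2 : x₂ ≤ -1) : ¬ SameSign u x₁ x₂ := by
  intro hs
  have hδ : 0 < x₂ - x₁ := sub_pos.mpr hx
  have iter : ∀ k : ℕ, ∃ t₁ t₂, BState u x₁ x₂ t₁ t₂ ∧ t₁ < 0 ∧ t₂ < 0 ∧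
      k * (x₂ - x₁) ≤ t₂ - t₁ := by
    intro k
    induction k with
    | zero =>
      obtain ⟨t₁, t₂, hb, h1, h2, h⟩ := exists_bState_neg hu hs hx hx2
      exact ⟨t₁, t₂, hb, h1, h2, by simpa using h⟩
    | succ k ih =>
      obtain ⟨t₁, t₂, hb, h1, h2, h⟩ := ih
      have hk : 0 ≤ k * (x₂ - x₁) := by positivity
      obtain ⟨t₁', t₂', hb', h1', h2', h'⟩ := hb.expand hu hs hx hx2 h1 (by linarith)
      refine ⟨t₁', t₂', hb', h1', h2', ?_⟩
      push_cast
      linarith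
  obtain ⟨k, hk⟩ := exists_nat_gt (1 / (x₂ - x₁))
  rw [div_lt_iff₀ hδ] at hk
  obtain ⟨t₁, t₂, hb, h1, -, h⟩ := iter k
  obtain ⟨n, ⟨l1, r1⟩, l2, r2⟩ := hb.exists_shift hs h1
  linarith

end

/-- For any vertex (p₀,q₀) of the Farey polynomial tree, the set of real roots of the
denominators of vertices in the subtree rooted at (p₀,q₀) is dense in (-∞,-1]. -/
theorem stmt5 (p₀q₀ : Polynomial ℤ × Polynomial ℤ) (h : IsFareyVertex p₀q₀) :
    Set.Iic (-1 : ℝ) ⊆ closure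
      {α : ℝ | ∃ pq : Polynomial ℤ × Polynomial ℤ,
        Relation.ReflTransGen FareyStep p₀q₀ pq ∧
        (pq.2.map (Int.castRingHom ℝ)).eval α = 0} := by
  intro x hx
  have hx : x ≤ -1 := hx
  rw [Metric.mem_closure_iff]
  intro ε hε
  by_contra! hno
  refine not_sameSign (coeffNonneg_root.trans h) (show x - ε / 2 < x by linarith) hx fun v hv => ?_
  by_contra! hneg
  -- The intermediate value theorem on `[x - ε / 2, x]` yields a root there.
  have hroot : ∃ α ∈ Set.uIcc (x - ε / 2) x, (v.2.map (Int.castRingHom ℝ)).eval α = 0 := by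
    have hivt := intermediate_value_uIcc (a := x - ε / 2) (b := x)
      (v.2.map (Int.castRingHom ℝ)).continuous.continuousOn
    refine hivt ?_
    rw [Set.mem_uIcc, ev_eq, ev_eq]
    rcases mul_nonpos_iff.mp hneg with h | h
    · exact Or.inr ⟨h.2, h.1⟩
    · exact Or.inl h
  obtain ⟨α, hα, hα0⟩ := hroot
  rw [Set.uIcc_of_le (by linarith), Set.mem_Icc] at hα
  have := hno α ⟨v, hv, hα0⟩
  rw [Real.dist_eq, abs_of_nonneg (by linarith)] at this
  linarith
end

section
/- Every vertex (p,q) of the Farey polynomial tree satisfies: p and q are monic integer polynomials of the same degree n ≥ 1; every coefficient of q is a positive integer; every coefficient of p in degrees 1 through n−1 is a positive integer and the constant coefficient of p is nonnegative; and for every index i with 0 ≤ i < n, the i-th coefficient of q is strictly larger than the i-th coefficient of p. -/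
/-!
The claim is proved by induction along a path from the root. The stated properties are exactly
an inductive invariant, recorded coefficientwise in `FareyInv n p q`, where `n` is the common degree.

If `p(0) ≠ 0`, then `p(0) > 0`, so all of `p_0, …, p_n` are positive and the degree rises by one.
The gap between the two new entries is `p` for `Φ0` and `X (q - p) + p` for `Φ1`, and both have
positive coefficients in degrees `0, …, n`. If `p(0) = 0`, the degree is unchanged and the gaps
are `p/X` and `(q - p) + p/X`, whose coefficients in degrees `0, …, n - 1` are positive because
those of `p` in degrees `1, …, n` are.
-/

open Polynomial

/-- Coefficientwise form of the invariant: `p` and `q` are monic of degree `n ≥ 1`, the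
coefficients of `p` are nonnegative in degree `0` and positive in degrees `1, …, n - 1`, and each
coefficient of `p` below degree `n` is smaller than that of `q`. Positivity of the coefficients of
`q` is then automatic. -/
structure FareyInv (n : ℕ) (p q : Polynomial ℤ) : Prop where
  one_le : 1 ≤ n
  top_p : p.coeff n = 1
  top_q : q.coeff n = 1
  high_p : ∀ i, n < i → p.coeff i = 0
  high_q : ∀ i, n < i → q.coeff i = 0
  zero_p : 0 ≤ p.coeff 0
  pos_p : ∀ i, 1 ≤ i → i < n → 0 < p.coeff i
  lt : ∀ i, i < n → p.coeff i < q.coeff i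

namespace FareyInv

variable {n : ℕ} {p q : Polynomial ℤ}

lemma pos_p' (h : FareyInv n p q) {i : ℕ} (h1 : 1 ≤ i) (hi : i ≤ n) : 0 < p.coeff i := by
  rcases hi.lt_or_eq with hlt | rfl
  · exact h.pos_p i h1 hlt
  · simp [h.top_p]

lemma nonneg_p (h : FareyInv n p q) {i : ℕ} (hi : i ≤ n) : 0 ≤ p.coeff i := by
  rcases Nat.eq_zero_or_pos i with rfl | h1
  · exact h.zero_p
  · exact (h.pos_p' h1 hi).le

lemma pos_q (h : FareyInv n p q) {i : ℕ} (hi : i ≤ n) : 0 < q.coeff i := by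
  rcases hi.lt_or_eq with hlt | rfl
  · exact (h.nonneg_p hi).trans_lt (h.lt i hlt)
  · simp [h.top_q]

lemma pos_p_of_ne (h : FareyInv n p q) (h0 : p.coeff 0 ≠ 0) {i : ℕ} (hi : i ≤ n) :
    0 < p.coeff i := by
  rcases Nat.eq_zero_or_pos i with rfl | h1
  · exact lt_of_le_of_ne h.zero_p h0.symm
  · exact h.pos_p' h1 hi

lemma root : FareyInv 1 X (X + 1) where
  one_le := le_rfl
  top_p := by simp
  top_q := by simp [coeff_one]
  high_p i hi := by simp [coeff_X, hi.ne]
  high_q i hi := by simp [coeff_X, coeff_one, hi.ne, (Nat.zero_lt_of_lt hi).ne']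
  zero_p := by simp
  pos_p i h1 hi := by omega
  lt i hi := by
    obtain rfl : i = 0 := by omega
    simp

lemma phi0_of_ne (h : FareyInv n p q) (h0 : p.coeff 0 ≠ 0) :
    FareyInv (n + 1) (X * q) (X * q + p) where
  one_le := by omega
  top_p := by simp [h.top_q]
  top_q := by simp [h.top_q, h.high_p]
  high_p i hi := by
    obtain ⟨j, rfl⟩ := Nat.exists_eq_add_one_of_ne_zero (Nat.ne_zero_of_lt hi)
    simpa using h.high_q j (by omega)
  high_q i hi := by
    obtain ⟨j, rfl⟩ := Nat.exists_eq_add_one_of_ne_zero (Nat.ne_zero_of_lt hi)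
    simp [h.high_q j (by omega), h.high_p (j + 1) (by omega)]
  zero_p := by simp
  pos_p i h1 hi := by
    obtain ⟨j, rfl⟩ := Nat.exists_eq_add_one_of_ne_zero (Nat.ne_zero_of_lt h1)
    simpa using h.pos_q (i := j) (by omega)
  lt i hi := by
    simpa using h.pos_p_of_ne h0 (i := i) (by omega)

lemma phi1_of_ne (h : FareyInv n p q) (h0 : p.coeff 0 ≠ 0) :
    FareyInv (n + 1) (X * p) (X * q + p) where
  one_le := by omega
  top_p := by simp [h.top_p]
  top_q := (h.phi0_of_ne h0).top_q
  high_p i hi := by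
    obtain ⟨j, rfl⟩ := Nat.exists_eq_add_one_of_ne_zero (Nat.ne_zero_of_lt hi)
    simpa using h.high_p j (by omega)
  high_q := (h.phi0_of_ne h0).high_q
  zero_p := by simp
  pos_p i h1 hi := by
    obtain ⟨j, rfl⟩ := Nat.exists_eq_add_one_of_ne_zero (Nat.ne_zero_of_lt h1)
    simpa using h.pos_p_of_ne h0 (i := j) (by omega)
  lt i hi := by
    have hpos := h.pos_p_of_ne h0 (i := i) (by omega)
    rcases i with _ | j
    · simpa using hpos
    · have hlt := h.lt j (by omega)
      simp only [coeff_add, coeff_X_mul]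
      omega

lemma phi0_of_eq (h : FareyInv n p q) : FareyInv n q (q + p.divX) where
  one_le := h.one_le
  top_p := h.top_q
  top_q := by simp [coeff_divX, h.top_q, h.high_p]
  high_p := h.high_q
  high_q i hi := by simp [coeff_divX, h.high_q i hi, h.high_p (i + 1) (by omega)]
  zero_p := (h.pos_q (Nat.zero_le n)).le
  pos_p i _ hi := h.pos_q hi.le
  lt i hi := by
    simpa [coeff_divX] using h.pos_p' (i := i + 1) (by omega) hi

lemma phi1_of_eq (h : FareyInv n p q) : FareyInv n p (q + p.divX) where
  one_le := h.one_le
  top_p := h.top_p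
  top_q := h.phi0_of_eq.top_q
  high_p := h.high_p
  high_q := h.phi0_of_eq.high_q
  zero_p := h.zero_p
  pos_p := h.pos_p
  lt i hi := (h.lt i hi).trans (h.phi0_of_eq.lt i hi)

lemma step {u v : Polynomial ℤ × Polynomial ℤ} (h : FareyInv n u.1 u.2) (huv : FareyStep u v) :
    ∃ m, FareyInv m v.1 v.2 := by
  by_cases h0 : u.1.coeff 0 = 0
  · rcases huv with rfl | rfl
    · exact ⟨n, by simpa [Phi0, h0] using h.phi0_of_eq⟩
    · exact ⟨n, by simpa [Phi1, h0] using h.phi1_of_eq⟩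
  · rcases huv with rfl | rfl
    · exact ⟨n + 1, by simpa [Phi0, h0] using h.phi0_of_ne h0⟩
    · exact ⟨n + 1, by simpa [Phi1, h0] using h.phi1_of_ne h0⟩

end FareyInv

lemma IsFareyVertex.exists_inv {pq : Polynomial ℤ × Polynomial ℤ} (h : IsFareyVertex pq) :
    ∃ n, FareyInv n pq.1 pq.2 := by
  induction h with
  | refl => exact ⟨1, FareyInv.root⟩
  | tail _ hstep ih =>
    obtain ⟨n, hn⟩ := ih
    exact hn.step hstep

lemma natDegree_eq_of_coeff {p : Polynomial ℤ} {n : ℕ} (htop : p.coeff n = 1)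
    (hhigh : ∀ i, n < i → p.coeff i = 0) : p.natDegree = n :=
  le_antisymm (natDegree_le_iff_coeff_eq_zero.2 hhigh)
    (le_natDegree_of_ne_zero (by simp [htop]))

/-- Elementary coefficient properties of the vertices of the Farey polynomial tree. -/
theorem stmt6 (pq : Polynomial ℤ × Polynomial ℤ) (h : IsFareyVertex pq) :
    pq.1.Monic ∧ pq.2.Monic ∧ pq.1.natDegree = pq.2.natDegree ∧ 1 ≤ pq.1.natDegree ∧
    (∀ i ≤ pq.2.natDegree, 0 < pq.2.coeff i) ∧
    (∀ i, 1 ≤ i → i < pq.1.natDegree → 0 < pq.1.coeff i) ∧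
    0 ≤ pq.1.coeff 0 ∧
    (∀ i < pq.1.natDegree, pq.1.coeff i < pq.2.coeff i) := by
  obtain ⟨n, hn⟩ := h.exists_inv
  have hp := natDegree_eq_of_coeff hn.top_p hn.high_p
  have hq := natDegree_eq_of_coeff hn.top_q hn.high_q
  refine ⟨?_, ?_, hp.trans hq.symm, hp ▸ hn.one_le, ?_, ?_, hn.zero_p, ?_⟩
  · rw [Monic, leadingCoeff, hp, hn.top_p]
  · rw [Monic, leadingCoeff, hq, hn.top_q]
  · rw [hq]
    exact fun i hi => hn.pos_q hi
  · rw [hp]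
    exact hn.pos_p
  · rw [hp]
    exact hn.lt
end

section
/- Let (p,q) be any vertex of the Farey polynomial tree, and let p', q' denote the derivatives of p and q. Then for every real number α with q(α) ≠ 0: (i) (p'q − pq')(α) > 0, so the rational function p/q is strictly increasing wherever it is defined; and (ii) α·(p'q − pq')(α) ≤ (p·q)(α), with equality if and only if α = 0 and p(0) = 0. -/
/-!
Write `W(p, q) = p'q - pq'` and, when `p = X r`, `V = r'q - rq'`. Then `pq - X W = -X² V`, so the
inequality to be proved is `V ≤ 0` away from the origin if `p(0) = 0`, and `pq - X W ≥ 0` otherwise.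
Under the two maps these quantities transform by sums of squares. If `p(0) ≠ 0`:

* `Φ0`: the new `W` is `pq - X W`, the new `-V` is `q² + W`;
* `Φ1`: the new `W` is `p² + X² W`, the new `-V` is `pq - X W`.

If `p = X r`:

* `Φ0`: the new `W` is `-V`, the new `pq - X W` is `q² + W`;
* `Φ1`: the new `W` is `W + r²`, the new `V` is `V`.

Hence `W > 0`, together with `pq - X W > 0` (if `p(0) ≠ 0`) or `V < 0` (if `p(0) = 0`), holds at every
real point and is preserved along the tree (`FareyPositive.step`). The case distinction stays
consistent because `W(0) = r(0) q(0) > 0` forces `q(0) ≠ 0` when `p(0) = 0`. Equality can then hold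
only when `p(0) = 0`, where it reads `α² V(α) = 0`, that is, `α = 0`.
-/

open Polynomial

/-- The real number `p'(α) q(α) - p(α) q'(α)`, for integer polynomials `p` and `q`. -/
noncomputable def fareyWronskian (p q : Polynomial ℤ) (α : ℝ) : ℝ :=
  aeval α (derivative p) * aeval α q - aeval α p * aeval α (derivative q)

/-- The positivity property preserved along the tree; it is required at every real point,
zeros of `q` included. -/
def FareyPositive (pq : Polynomial ℤ × Polynomial ℤ) : Prop :=
  (∀ α, 0 < fareyWronskian pq.1 pq.2 α) ∧
  (pq.1.coeff 0 ≠ 0 →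
    ∀ α : ℝ, α * fareyWronskian pq.1 pq.2 α < aeval α pq.1 * aeval α pq.2) ∧
  (pq.1.coeff 0 = 0 → ∀ α, fareyWronskian pq.1.divX pq.2 α < 0)

lemma eq_X_mul_divX {p : Polynomial ℤ} (h : p.coeff 0 = 0) : p = X * p.divX := by
  conv_lhs => rw [← X_mul_divX_add p, h]
  simp

lemma divX_X_mul_int (p : Polynomial ℤ) : (X * p).divX = p := by
  ext n
  simp [coeff_divX, coeff_X_mul]

lemma aeval_zero_real (p : Polynomial ℤ) : aeval (0 : ℝ) p = (p.coeff 0 : ℝ) := by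
  rw [aeval_def, eval₂_at_zero]
  rfl

lemma FareyPositive.root : FareyPositive (X, X + 1) := by
  have hd : (X : Polynomial ℤ).divX = 1 := by
    simpa using divX_X_mul_int 1
  refine ⟨fun α => ?_, fun h => absurd coeff_X_zero h, fun _ α => ?_⟩
  · simp [fareyWronskian]
  · simp [fareyWronskian, hd]

lemma FareyPositive.step {u v : Polynomial ℤ × Polynomial ℤ} (hu : FareyPositive u)
    (huv : FareyStep u v) : FareyPositive v := by
  obtain ⟨p, q⟩ := u
  obtain ⟨hW, hD, hV⟩ := hu
  by_cases hp : p.coeff 0 = 0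
  · replace hV := hV hp
    simp only at hW hV
    have hpr := eq_X_mul_divX hp
    rcases huv with rfl | rfl
    · simp only [Phi0, hp, ne_eq, not_true_eq_false, if_false]
      generalize p.divX = r at *
      subst hpr
      have hq : q.coeff 0 ≠ 0 := by
        intro hq
        have := hW 0
        simp [fareyWronskian, aeval_zero_real, hq] at this
      refine ⟨fun α => ?_, fun _ α => ?_, fun h => absurd h hq⟩
      · have := hV α
        simp [fareyWronskian] at this ⊢
        linarith
      · have := hW α
        simp [fareyWronskian] at this ⊢
        nlinarith [sq_nonneg (aeval α q)]
    · simp only [Phi1, hp, ne_eq, not_true_eq_false, if_false]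
      refine ⟨fun α => ?_, fun h => absurd hp h, fun _ α => ?_⟩
      · generalize p.divX = r at *
        subst hpr
        have := hW α
        simp [fareyWronskian] at this ⊢
        nlinarith [sq_nonneg (aeval α r)]
      · have := hV α
        simp [fareyWronskian] at this ⊢
        linarith
  · replace hD := hD hp
    simp only at hW hD
    rcases huv with rfl | rfl
    · simp only [Phi0, ne_eq, hp, not_false_eq_true, if_true]
      refine ⟨fun α => ?_, fun h => absurd (by simp) h, fun _ α => ?_⟩
      · have := hD α
        simp [fareyWronskian] at this ⊢
        linarith
      · have := hW α
        simp only [divX_X_mul_int]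
        simp [fareyWronskian] at this ⊢
        nlinarith [sq_nonneg (aeval α q)]
    · simp only [Phi1, ne_eq, hp, not_false_eq_true, if_true]
      refine ⟨fun α => ?_, fun h => absurd (by simp) h, fun _ α => ?_⟩
      · have key : 0 < (aeval α p) ^ 2 + α ^ 2 * fareyWronskian p q α := by
          rcases eq_or_ne α 0 with rfl | hα
          · have : (p.coeff 0 : ℝ) ≠ 0 := by exact_mod_cast hp
            simp only [aeval_zero_real, zero_pow two_ne_zero, zero_mul, add_zero]
            positivity
          · have := hW α
            positivity
        simp [fareyWronskian] at key ⊢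
        linarith
      · have := hD α
        simp only [divX_X_mul_int]
        simp [fareyWronskian] at this ⊢
        linarith

lemma IsFareyVertex.positive {pq : Polynomial ℤ × Polynomial ℤ} (h : IsFareyVertex pq) :
    FareyPositive pq := by
  induction h with
  | refl => exact FareyPositive.root
  | tail _ hs ih => exact ih.step hs

/-- At every vertex (p,q), over ℝ: the Wronskian p'q - pq' is positive wherever q ≠ 0
(so p/q is strictly increasing where defined), and α·(p'q - pq')(α) ≤ (pq)(α) with
equality iff α = 0 and p(0) = 0. -/
theorem stmt7 (pq : Polynomial ℤ × Polynomial ℤ) (h : IsFareyVertex pq)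
    (P Q : Polynomial ℝ)
    (hP : P = pq.1.map (Int.castRingHom ℝ)) (hQ : Q = pq.2.map (Int.castRingHom ℝ))
    (α : ℝ) (hα : Q.eval α ≠ 0) :
    0 < (P.derivative * Q - P * Q.derivative).eval α ∧
    α * (P.derivative * Q - P * Q.derivative).eval α ≤ (P * Q).eval α ∧
    (α * (P.derivative * Q - P * Q.derivative).eval α = (P * Q).eval α ↔
      α = 0 ∧ P.eval 0 = 0) := by
  obtain ⟨hW, hD, hV⟩ := h.positive
  obtain ⟨p, q⟩ := pq
  have ev : ∀ (f : Polynomial ℤ) (x : ℝ), (f.map (Int.castRingHom ℝ)).eval x = aeval x f :=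
    fun f x => by rw [eval_map, aeval_def]; rfl
  have hPW : (P.derivative * Q - P * Q.derivative).eval α = fareyWronskian p q α := by
    simp only [hP, hQ, derivative_map, eval_sub, eval_mul, ev, fareyWronskian]
  have hP0 : P.eval 0 = 0 ↔ p.coeff 0 = 0 := by
    rw [hP, ev, aeval_zero_real, Int.cast_eq_zero]
  have hPQ : (P * Q).eval α = aeval α p * aeval α q := by
    simp only [hP, hQ, eval_mul, ev]
  rw [hPW, hPQ, hP0]
  refine ⟨hW α, ?_⟩
  by_cases hp : p.coeff 0 = 0
  · have hv := hV hp α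
    have key : aeval α p * aeval α q - α * fareyWronskian p q α
        = α ^ 2 * -fareyWronskian p.divX q α := by
      have hpr := eq_X_mul_divX hp
      generalize p.divX = r at *
      subst hpr
      simp [fareyWronskian]
      ring
    simp only at hv
    have hnn : 0 ≤ α ^ 2 * -fareyWronskian p.divX q α :=
      mul_nonneg (sq_nonneg α) (by linarith)
    refine ⟨by linarith, fun he => ⟨?_, hp⟩, fun h0 => ?_⟩
    · rw [he, sub_self, eq_comm, mul_eq_zero] at key
      rcases key with h0 | h0
      · exact pow_eq_zero_iff (two_ne_zero) |>.mp h0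
      · linarith
    · rw [h0.1] at key ⊢
      linarith
  · have hd := hD hp α
    exact ⟨hd.le, fun he => absurd he hd.ne, fun h0 => absurd h0.2 hp⟩
end

section
/- Let (p,q) be any vertex of the Farey polynomial tree and let n be the common degree of p and q. Then there exist real numbers r_1,…,r_n and s_1,…,s_n such that, as real polynomials, p = ∏_{i=1}^n (X − r_i) and q = ∏_{i=1}^n (X − s_i), and these roots satisfy s_n < r_n < s_{n−1} < r_{n−1} < ⋯ < s_1 < r_1 ≤ 0 and s_n ≤ −1. In particular p and q split over ℝ with simple, nonpositive, strictly interlacing roots, they share no roots, and the largest of all the roots is a root of p. -/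
/-!
The interlacing property is an invariant of both maps. Given the new first component
`p'`, with roots `t₀ > t₁ > ⋯`, each step produces a monic polynomial `q'` of the same degree whose
values at the roots `tᵢ` of `p'` have sign `(-1)^i`: at a root of `q` (or of `p`) one of the two
summands of `q'` vanishes, and the sign of the other is read off from the number of its roots lying
to the right of that point (`sign_prod`); at the root `0` of `p'` both summands are nonnegative. The intermediate value theorem then gives one root of `q'`
in each interval `(tᵢ₊₁, tᵢ)` and, since `q'` has sign `(-1)^n` near `-∞`, one more root to the left.
These are all the roots of `q'` by degree (`interlace_of_sign`). The last root even lies to the left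
of the smallest root of `q`, because `q'` still has sign `(-1)^(n-1)` there, and so the bound `≤ -1`
propagates. If `p(0) = 0` then the largest root of `p` is `0`, and `p / X` is the product over the
remaining roots.
-/

open Polynomial

/-- The points with indices `0, …, m` satisfy `s_m < r_m < s_{m-1} < ⋯ < s_0 < r_0`. -/
def Interlace (m : ℕ) (r s : ℕ → ℝ) : Prop :=
  (∀ i ≤ m, s i < r i) ∧ ∀ i < m, r (i + 1) < s i

/-- The monic polynomial of degree `n` with roots `r 0, …, r (n - 1)`, counted with multiplicity. -/
noncomputable def rootPoly (n : ℕ) (r : ℕ → ℝ) : ℝ[X] := ∏ i ∈ Finset.range n, (X - C (r i))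

lemma rootPoly_monic (n : ℕ) (r : ℕ → ℝ) : (rootPoly n r).Monic :=
  monic_prod_of_monic _ _ fun i _ => monic_X_sub_C (r i)

lemma rootPoly_natDegree (n : ℕ) (r : ℕ → ℝ) : (rootPoly n r).natDegree = n := by
  rw [rootPoly, natDegree_prod_of_monic _ _ fun i _ => monic_X_sub_C (r i)]
  simp

lemma rootPoly_degree (n : ℕ) (r : ℕ → ℝ) : (rootPoly n r).degree = n := by
  rw [degree_eq_natDegree (rootPoly_monic n r).ne_zero, rootPoly_natDegree]

lemma rootPoly_eval (n : ℕ) (r : ℕ → ℝ) (x : ℝ) :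
    (rootPoly n r).eval x = ∏ i ∈ Finset.range n, (x - r i) := by
  simp [rootPoly, eval_prod]

lemma rootPoly_succ (n : ℕ) (r : ℕ → ℝ) :
    rootPoly (n + 1) r = (X - C (r 0)) * rootPoly n (fun i => r (i + 1)) := by
  simp only [rootPoly]
  rw [Finset.prod_range_succ', mul_comm]

lemma rootPoly_eval_root {n i : ℕ} (r : ℕ → ℝ) (h : i < n) : (rootPoly n r).eval (r i) = 0 := by
  rw [rootPoly_eval]
  exact Finset.prod_eq_zero (Finset.mem_range.2 h) (sub_self _)

/-- If the first `i` roots lie to the right of `x` and the others to its left, the value at `x` has sign `(-1)^i`. -/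
lemma sign_prod {n i : ℕ} (r : ℕ → ℝ) (x : ℝ) (hi : i ≤ n) (h1 : ∀ j < i, x < r j)
    (h2 : ∀ j, i ≤ j → j < n → r j < x) : 0 < (-1) ^ i * (rootPoly n r).eval x := by
  rw [rootPoly_eval, ← Finset.prod_range_mul_prod_Ico _ hi, ← mul_assoc]
  have e : ((-1 : ℝ) ^ i) * ∏ j ∈ Finset.range i, (x - r j)
      = ∏ j ∈ Finset.range i, (r j - x) := by
    have := Finset.prod_const (s := Finset.range i) (-1 : ℝ)
    rw [Finset.card_range] at this
    rw [← this, ← Finset.prod_mul_distrib]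
    exact Finset.prod_congr rfl fun j _ => by ring
  rw [e]
  refine mul_pos (Finset.prod_pos fun j hj => ?_) (Finset.prod_pos fun j hj => ?_)
  · exact sub_pos.2 (h1 j (Finset.mem_range.1 hj))
  · exact sub_pos.2 (h2 j (Finset.mem_Ico.1 hj).1 (Finset.mem_Ico.1 hj).2)

lemma Interlace.s_anti {m : ℕ} {r s : ℕ → ℝ} (h : Interlace m r s) {j i : ℕ} (hji : j ≤ i)
    (hi : i ≤ m) : s i ≤ s j := by
  induction i, hji using Nat.le_induction with
  | base => exact le_rfl
  | succ k hk ih =>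
    exact ((h.1 (k + 1) hi).trans (h.2 k (by omega))).le.trans (ih (by omega))

lemma Interlace.s_lt_r {m : ℕ} {r s : ℕ → ℝ} (h : Interlace m r s) {j i : ℕ} (hji : j ≤ i)
    (hi : i ≤ m) : s i < r j :=
  (h.s_anti hji hi).trans_lt (h.1 j (hji.trans hi))

lemma Interlace.r_lt_s {m : ℕ} {r s : ℕ → ℝ} (h : Interlace m r s) {j i : ℕ} (hji : j < i)
    (hi : i ≤ m) : r i < s j := by
  obtain ⟨k, rfl⟩ : ∃ k, i = k + 1 := ⟨i - 1, by omega⟩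
  exact (h.2 k (by omega)).trans_le (h.s_anti (by omega) (by omega))

/-- A monic polynomial of degree `n + 1` has sign `(-1)^(n + 1)` near `-∞`. -/
lemma exists_sign_lt (n : ℕ) (Q : ℝ[X]) (hQ : Q.Monic) (hd : Q.natDegree = n + 1) (c : ℝ) :
    ∃ y < c, 0 < (-1) ^ (n + 1) * Q.eval y := by
  have hlc : (Q.comp (-X)).leadingCoeff = (-1) ^ (n + 1) := by
    rw [leadingCoeff_comp (by simp), hQ.leadingCoeff, hd]
    simp
  have hdeg : (Q.comp (-X)).natDegree = n + 1 := by
    rw [natDegree_comp, hd]; simp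
  have hne : ((-1 : ℝ) ^ (n + 1)) ≠ 0 := pow_ne_zero _ (by norm_num)
  have ht := tendsto_atTop_of_leadingCoeff_nonneg (C ((-1 : ℝ) ^ (n + 1)) * Q.comp (-X))
    (by rw [← natDegree_pos_iff_degree_pos, natDegree_C_mul hne, hdeg]; omega)
    (by rw [leadingCoeff_mul, leadingCoeff_C, hlc, ← mul_pow]; norm_num)
  obtain ⟨x, hx1, hx2⟩ :=
    ((ht.eventually_gt_atTop 0).and (Filter.eventually_gt_atTop (-c))).exists
  refine ⟨-x, by linarith, ?_⟩
  simpa using hx1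

/-- Intermediate value theorem in the form needed below: a sign change across an interval, with
the sign normalised by `(-1)^i`, yields an interior root. -/
lemma exists_root_Ioo (Q : ℝ[X]) (i : ℕ) {a b : ℝ} (hab : a < b)
    (ha : 0 < (-1) ^ (i + 1) * Q.eval a) (hb : 0 < (-1) ^ i * Q.eval b) :
    ∃ x, Q.eval x = 0 ∧ a < x ∧ x < b := by
  have hc : ContinuousOn (fun x => (-1) ^ i * Q.eval x) (Set.Icc a b) := by fun_prop
  have hmem : (0 : ℝ) ∈ Set.Ioo ((-1) ^ i * Q.eval a) ((-1) ^ i * Q.eval b) :=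
    ⟨by rw [pow_succ] at ha; linarith, hb⟩
  obtain ⟨x, hx, h0⟩ := intermediate_value_Ioo hab.le hc hmem
  exact ⟨x, (mul_eq_zero.1 h0).resolve_left (pow_ne_zero _ (by norm_num)), hx.1, hx.2⟩

lemma eq_rootPoly {m : ℕ} {Q : ℝ[X]} {t s : ℕ → ℝ} (hQ : Q.Monic) (hd : Q.natDegree = m + 1)
    (h : Interlace m t s) (hs : ∀ i ≤ m, Q.eval (s i) = 0) : Q = rootPoly (m + 1) s := by
  refine eq_of_monic_of_dvd_of_natDegree_le (rootPoly_monic _ _) hQ ?_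
    (by rw [hd, rootPoly_natDegree])
  refine Finset.prod_dvd_of_coprime ?_ fun i hi => ?_
  · intro i hi j hj hij
    simp only [Finset.coe_range, Set.mem_Iio] at hi hj
    refine isCoprime_X_sub_C_of_isUnit_sub (sub_ne_zero.2 ?_).isUnit
    rcases lt_or_gt_of_ne hij with hlt | hlt
    · exact ((h.1 j (by omega)).trans (h.r_lt_s hlt (by omega))).ne'
    · exact ((h.1 i (by omega)).trans (h.r_lt_s hlt (by omega))).ne
  · exact dvd_iff_isRoot.2 (hs i (by have := Finset.mem_range.1 hi; omega))

/-- A monic polynomial whose values at `t_0 > ⋯ > t_m` alternate in sign, starting with `+`, splits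
with roots interlacing the `t_i`; a further point `c ≤ t_m` with the sign of `t_m` bounds the last
root. -/
lemma interlace_of_sign (m : ℕ) (t : ℕ → ℝ) (Q : ℝ[X]) (hQ : Q.Monic) (hd : Q.natDegree = m + 1)
    (ht : ∀ i < m, t (i + 1) < t i) (hsign : ∀ i ≤ m, 0 < (-1) ^ i * Q.eval (t i)) (c : ℝ)
    (hc : c ≤ t m) (hcs : 0 < (-1) ^ m * Q.eval c) :
    ∃ s, Q = rootPoly (m + 1) s ∧ Interlace m t s ∧ s m < c := by
  obtain ⟨y, hyc, hy⟩ := exists_sign_lt m Q hQ hd c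
  have key : ∀ i, ∃ x, i ≤ m →
      Q.eval x = 0 ∧ x < t i ∧ (i < m → t (i + 1) < x) ∧ (i = m → x < c) := by
    intro i
    by_cases him : i < m
    · obtain ⟨x, h0, h1, h2⟩ :=
        exists_root_Ioo Q i (ht i him) (hsign (i + 1) (by omega)) (hsign i (by omega))
      exact ⟨x, fun _ => ⟨h0, h2, fun _ => h1, fun h => by omega⟩⟩
    · by_cases h : i = m
      · subst h
        obtain ⟨x, h0, h1, h2⟩ := exists_root_Ioo Q i hyc hy hcs
        exact ⟨x, fun _ => ⟨h0, h2.trans_le hc, fun h => by omega, fun _ => h2⟩⟩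
      · exact ⟨0, fun _ => by omega⟩
  choose s hs using key
  have hI : Interlace m t s :=
    ⟨fun i hi => (hs i hi).2.1, fun i hi => (hs i (by omega)).2.2.1 hi⟩
  exact ⟨s, eq_rootPoly hQ hd hI fun i hi => (hs i hi).1, hI, (hs m le_rfl).2.2.2 rfl⟩

/-- The invariant carried down the tree, for the images of `p` and `q` in `ℝ[X]`. The common
degree is `m + 1`, hence positive, so that the smallest root `s m` of `q` exists. -/
def Good (P Q : ℝ[X]) : Prop :=
  ∃ (m : ℕ) (r s : ℕ → ℝ), P = rootPoly (m + 1) r ∧ Q = rootPoly (m + 1) s ∧ r 0 ≤ 0 ∧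
    Interlace m r s ∧ s m ≤ -1

lemma sign_P_at_s {m i : ℕ} {r s : ℕ → ℝ} (h : Interlace m r s) (hi : i ≤ m) :
    0 < (-1) ^ (i + 1) * (rootPoly (m + 1) r).eval (s i) :=
  sign_prod r _ (by omega) (fun j hj => h.s_lt_r (by omega) hi)
    fun j h1 h2 => h.r_lt_s (by omega) (by omega)

lemma sign_Q_at_r {m i : ℕ} {r s : ℕ → ℝ} (h : Interlace m r s) (hi : i ≤ m) :
    0 < (-1) ^ i * (rootPoly (m + 1) s).eval (r i) :=
  sign_prod s _ (by omega) (fun j hj => h.r_lt_s hj hi)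
    fun j h1 h2 => h.s_lt_r h1 (by omega)

/-- The polynomial with roots `r 1, …, r m` is `p / X` when `r 0 = 0`. -/
lemma sign_divX_at_s {m i : ℕ} {r s : ℕ → ℝ} (h : Interlace m r s) (hi : i ≤ m) :
    0 < (-1) ^ i * (rootPoly m fun j => r (j + 1)).eval (s i) :=
  sign_prod _ _ hi (fun j hj => h.s_lt_r (by omega) hi)
    fun j h1 h2 => h.r_lt_s (by omega) (by omega)

lemma sign_divX_at_r {m i : ℕ} {r s : ℕ → ℝ} (h : Interlace m r s) (hi : i ≤ m) :
    0 ≤ (-1) ^ i * (rootPoly m fun j => r (j + 1)).eval (r i) := by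
  rcases i with _ | i
  · exact (sign_prod _ _ (by omega) (fun j hj => by omega)
      fun j _ h2 => (h.2 j h2).trans ((h.s_lt_r (by omega) h2.le))).le
  · rw [rootPoly_eval_root (fun j => r (j + 1)) (i := i) (by omega), mul_zero]

lemma X_mul_rootPoly (n : ℕ) (r : ℕ → ℝ) :
    X * rootPoly n r = rootPoly (n + 1) (fun i => Nat.casesOn i 0 r) := by
  rw [rootPoly_succ]
  simp

/-- Both children when `p(0) ≠ 0`. -/
lemma good_of_neg {m : ℕ} {r s : ℕ → ℝ} (hr : r 0 < 0) (h : Interlace m r s) (hs : s m ≤ -1) :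
    Good (X * rootPoly (m + 1) s) (X * rootPoly (m + 1) s + rootPoly (m + 1) r) ∧
    Good (X * rootPoly (m + 1) r) (X * rootPoly (m + 1) s + rootPoly (m + 1) r) := by
  have hlt : (rootPoly (m + 1) r).degree < (X * rootPoly (m + 1) s).degree := by
    rw [X_mul_rootPoly, rootPoly_degree, rootPoly_degree]
    exact_mod_cast Nat.lt_succ_self _
  have hmon : (X * rootPoly (m + 1) s + rootPoly (m + 1) r).Monic :=
    (monic_X.mul (rootPoly_monic _ _)).add_of_left hlt
  have hdeg : (X * rootPoly (m + 1) s + rootPoly (m + 1) r).natDegree = m + 1 + 1 := by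
    rw [natDegree_add_eq_left_of_degree_lt hlt, X_mul_rootPoly, rootPoly_natDegree]
  have hneg : ∀ i ≤ m, r i < 0 := fun i hi => by
    rcases i with _ | i
    · exact hr
    · exact (h.2 i hi).trans ((h.s_lt_r (Nat.zero_le _) (by omega)).trans hr)
  have h0 : 0 < (X * rootPoly (m + 1) s + rootPoly (m + 1) r).eval 0 := by
    have := sign_prod (n := m + 1) (i := 0) r 0 (by omega) (fun j hj => by omega)
      fun j _ hj => hneg j (by omega)
    simpa using this
  have hS : ∀ i ≤ m,
      0 < (-1) ^ (i + 1) * (X * rootPoly (m + 1) s + rootPoly (m + 1) r).eval (s i) := by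
    intro i hi
    have := sign_P_at_s h hi
    rwa [eval_add, eval_mul, rootPoly_eval_root s (by omega), mul_zero, zero_add]
  have hR : ∀ i ≤ m,
      0 < (-1) ^ (i + 1) * (X * rootPoly (m + 1) s + rootPoly (m + 1) r).eval (r i) := by
    intro i hi
    have := mul_pos (neg_pos.2 (hneg i hi)) (sign_Q_at_r h hi)
    rw [eval_add, eval_mul, rootPoly_eval_root r (by omega), add_zero, eval_X, pow_succ]
    linarith
  constructor
  · obtain ⟨s', e, hI, hb⟩ := interlace_of_sign (m + 1) (fun i => Nat.casesOn i 0 s) _ hmon hdeg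
      (fun i hi => by
        rcases i with _ | i
        · exact (h.1 0 (Nat.zero_le _)).trans hr
        · exact (h.1 (i + 1) (by omega)).trans (h.2 i (by omega)))
      (fun i hi => by
        rcases i with _ | i
        · simpa using h0
        · exact hS i (by omega))
      (s m) le_rfl (hS m le_rfl)
    exact ⟨m + 1, _, s', X_mul_rootPoly _ _, e, le_rfl, hI, hb.le.trans hs⟩
  · obtain ⟨s', e, hI, hb⟩ := interlace_of_sign (m + 1) (fun i => Nat.casesOn i 0 r) _ hmon hdeg
      (fun i hi => by
        rcases i with _ | i
        · exact hr
        · exact (h.2 i (by omega)).trans (h.1 i (by omega)))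
      (fun i hi => by
        rcases i with _ | i
        · simpa using h0
        · exact hR i (by omega))
      (s m) (h.1 m le_rfl).le (hS m le_rfl)
    exact ⟨m + 1, _, s', X_mul_rootPoly _ _, e, le_rfl, hI, hb.le.trans hs⟩

/-- Both children when `p(0) = 0`. -/
lemma good_of_zero {m : ℕ} {r s : ℕ → ℝ} (hr : r 0 = 0) (h : Interlace m r s) (hs : s m ≤ -1) :
    Good (rootPoly (m + 1) s) (rootPoly (m + 1) s + rootPoly m fun j => r (j + 1)) ∧
    Good (rootPoly (m + 1) r) (rootPoly (m + 1) s + rootPoly m fun j => r (j + 1)) := by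
  have hlt : (rootPoly m fun j => r (j + 1)).degree < (rootPoly (m + 1) s).degree := by
    rw [rootPoly_degree, rootPoly_degree]
    exact_mod_cast Nat.lt_succ_self _
  have hmon : (rootPoly (m + 1) s + rootPoly m fun j => r (j + 1)).Monic :=
    (rootPoly_monic _ _).add_of_left hlt
  have hdeg : (rootPoly (m + 1) s + rootPoly m fun j => r (j + 1)).natDegree = m + 1 := by
    rw [natDegree_add_eq_left_of_degree_lt hlt, rootPoly_natDegree]
  have hS : ∀ i ≤ m,
      0 < (-1) ^ i * (rootPoly (m + 1) s + rootPoly m fun j => r (j + 1)).eval (s i) := by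
    intro i hi
    have := sign_divX_at_s h hi
    rwa [eval_add, rootPoly_eval_root s (by omega), zero_add]
  have hR : ∀ i ≤ m,
      0 < (-1) ^ i * (rootPoly (m + 1) s + rootPoly m fun j => r (j + 1)).eval (r i) := by
    intro i hi
    rw [eval_add, mul_add]
    exact add_pos_of_pos_of_nonneg (sign_Q_at_r h hi) (sign_divX_at_r h hi)
  constructor
  · obtain ⟨s', e, hI, hb⟩ := interlace_of_sign m s _ hmon hdeg
      (fun i hi => (h.1 (i + 1) (by omega)).trans (h.2 i hi)) hS (s m) le_rfl (hS m le_rfl)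
    exact ⟨m, s, s', rfl, e, hr ▸ (h.1 0 (Nat.zero_le _)).le, hI, hb.le.trans hs⟩
  · obtain ⟨s', e, hI, hb⟩ := interlace_of_sign m r _ hmon hdeg
      (fun i hi => (h.2 i hi).trans (h.1 i (by omega))) hR (s m) (h.1 m le_rfl).le (hS m le_rfl)
    exact ⟨m, r, s', rfl, e, hr.le, hI, hb.le.trans hs⟩

lemma good_step {u v : ℤ[X] × ℤ[X]} (huv : FareyStep u v)
    (hu : Good (u.1.map (Int.castRingHom ℝ)) (u.2.map (Int.castRingHom ℝ))) :
    Good (v.1.map (Int.castRingHom ℝ)) (v.2.map (Int.castRingHom ℝ)) := by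
  obtain ⟨m, r, s, hp, hq, hr, hI, hs⟩ := hu
  have hc : ((u.1.coeff 0 : ℤ) : ℝ) = (rootPoly (m + 1) r).eval 0 := by
    rw [← hp, ← coeff_zero_eq_eval_zero, coeff_map]
    rfl
  rcases hr.lt_or_eq with hr | hr
  · have hne : u.1.coeff 0 ≠ 0 := by
      have := sign_prod (n := m + 1) (i := 0) r 0 (by omega) (fun j hj => by omega)
        (fun j _ hj => by
          rcases j with _ | j
          · exact hr
          · exact ((hI.2 j (by omega)).trans (hI.s_lt_r (Nat.zero_le _) (by omega))).trans hr)
      rw [← hc] at this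
      intro h0
      simp [h0] at this
    have := good_of_neg hr hI hs
    rw [← hp, ← hq] at this
    rcases huv with rfl | rfl
    · simpa [Phi0, hne] using this.1
    · simpa [Phi1, hne] using this.2
  · have h0 : u.1.coeff 0 = 0 := by
      have := rootPoly_eval_root (n := m + 1) r (i := 0) (by omega)
      rw [hr, ← hc] at this
      exact_mod_cast this
    have hdiv : u.1.divX.map (Int.castRingHom ℝ) = rootPoly m fun j => r (j + 1) := by
      have e := congrArg (Polynomial.map (Int.castRingHom ℝ)) (X_mul_divX_add u.1)
      rw [h0, hp, rootPoly_succ, hr] at e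
      simp only [map_zero, add_zero, sub_zero, Polynomial.map_mul, map_X] at e
      exact mul_left_cancel₀ X_ne_zero e
    have := good_of_zero hr hI hs
    rw [← hp, ← hq, ← hdiv] at this
    rcases huv with rfl | rfl
    · simpa [Phi0, h0] using this.1
    · simpa [Phi1, h0] using this.2

lemma good_of_vertex {pq : ℤ[X] × ℤ[X]} (h : IsFareyVertex pq) :
    Good (pq.1.map (Int.castRingHom ℝ)) (pq.2.map (Int.castRingHom ℝ)) := by
  induction h with
  | refl =>
    refine ⟨0, fun _ => 0, fun _ => -1, ?_, ?_, le_rfl, ⟨fun i _ => ?_, fun i hi => ?_⟩, le_rfl⟩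
    · simp [rootPoly]
    · simp [rootPoly]
    · norm_num
    · omega
  | tail _ hstep ih => exact good_step hstep ih

/-- Every vertex (p,q) of degree n splits over ℝ with simple, nonpositive, strictly
interlacing roots s_n < r_n < s_{n-1} < ⋯ < s_1 < r_1 ≤ 0 and s_n ≤ -1. Here the roots
are indexed so that `r i`, `s i` correspond to r_{i+1}, s_{i+1} for 0 ≤ i < n. -/
theorem stmt8 (pq : Polynomial ℤ × Polynomial ℤ) (h : IsFareyVertex pq) :
    ∃ (n : ℕ) (r s : ℕ → ℝ),
      n = pq.1.natDegree ∧ n = pq.2.natDegree ∧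
      pq.1.map (Int.castRingHom ℝ) = ∏ i ∈ Finset.range n, (X - C (r i)) ∧
      pq.2.map (Int.castRingHom ℝ) = ∏ i ∈ Finset.range n, (X - C (s i)) ∧
      r 0 ≤ 0 ∧
      (∀ i < n, s i < r i) ∧
      (∀ i, i + 1 < n → r (i + 1) < s i) ∧
      (0 < n → s (n - 1) ≤ -1) := by
  obtain ⟨m, r, s, hp, hq, hr, hI, hs⟩ := good_of_vertex h
  have hinj : Function.Injective (Int.castRingHom ℝ) := Int.cast_injective
  refine ⟨m + 1, r, s, ?_, ?_, hp, hq, hr, fun i hi => hI.1 i (by omega),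
    fun i hi => hI.2 i (by omega), fun _ => hs⟩
  · rw [← natDegree_map_eq_of_injective hinj, hp, rootPoly_natDegree]
  · rw [← natDegree_map_eq_of_injective hinj, hq, rootPoly_natDegree]
end

section
/- Let x ∈ (0,1) and let t ∈ (0,1) be such that T_x^n(t) ≠ 0 for all n ∈ ℕ. Define digits a_n = ⌊x/T_x^{n−1}(t) − x⌋ + 1 for n ≥ 1, and define sequences p_n, q_n by p_{−1} = 1, p_0 = 0, q_{−1} = 0, q_0 = 1, and p_n = (x + a_n − 1)·p_{n−1} + x·p_{n−2}, q_n = (x + a_n − 1)·q_{n−1} + x·q_{n−2} for n ≥ 1. Then the convergents p_n/q_n converge to t as n → ∞. -/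
/-- For x ∈ (0,1) and t ∈ (0,1) with infinite x-expansion, the convergents p_n/q_n
(built from the digits a_n = ⌊x/T_x^{n-1}(t) - x⌋ + 1 and the standard recurrences,
indexed here with a shift so that `p (n+1)` is p_n and `p 0` is p_{-1}) converge to t. -/
theorem stmt10 (x : ℝ) (hx : x ∈ Set.Ioo (0 : ℝ) 1) (t : ℝ) (ht : t ∈ Set.Ioo (0 : ℝ) 1)
    (hinf : ∀ n : ℕ, (Tmap x)^[n] t ≠ 0)
    (a : ℕ → ℤ) (ha : ∀ n : ℕ, 1 ≤ n → a n = ⌊x / ((Tmap x)^[n - 1] t) - x⌋ + 1)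
    (p q : ℕ → ℝ)
    (hpm1 : p 0 = 1) (hp0 : p 1 = 0) (hqm1 : q 0 = 0) (hq0 : q 1 = 1)
    (hp : ∀ n : ℕ, p (n + 2) = (x + (a (n + 1) : ℝ) - 1) * p (n + 1) + x * p n)
    (hq : ∀ n : ℕ, q (n + 2) = (x + (a (n + 1) : ℝ) - 1) * q (n + 1) + x * q n) :
    Filter.Tendsto (fun n : ℕ => p (n + 1) / q (n + 1)) Filter.atTop (nhds t) := by
  obtain ⟨hx0, hx1⟩ := hx
  obtain ⟨s, hs⟩ : ∃ s : ℕ → ℝ, ∀ n, s n = (Tmap x)^[n] t := ⟨_, fun _ => rfl⟩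
  obtain ⟨b, hb⟩ : ∃ b : ℕ → ℝ, ∀ n, b n = x + (a (n + 1) : ℝ) - 1 := ⟨_, fun _ => rfl⟩
  have hs0 : s 0 = t := by simp [hs]
  have hsne : ∀ n, s n ≠ 0 := fun n => by rw [hs]; exact hinf n
  have hsucc : ∀ n, s (n + 1) = Int.fract (x / s n - x) := fun n => by
    rw [hs (n + 1), Function.iterate_succ_apply', ← hs n, Tmap, if_neg (hsne n)]
  have hspos : ∀ n, 0 < s n ∧ s n < 1 := by
    intro n
    cases n with
    | zero => rw [hs0]; exact ht
    | succ k =>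
      refine ⟨lt_of_le_of_ne ?_ (hsne _).symm, ?_⟩
      · rw [hsucc]; exact Int.fract_nonneg _
      · rw [hsucc]; exact Int.fract_lt_one _
  have hbeq : ∀ n, s n * (b n + s (n + 1)) = x := by
    intro n
    have h1 := Int.floor_add_fract (x / s n - x)
    have h2 := ha (n + 1) (by omega)
    rw [Nat.add_sub_cancel, ← hs n] at h2
    have h3 : b n + s (n + 1) = x / s n := by
      rw [hb, h2, hsucc]; push_cast; linarith
    rw [h3]; field_simp [hsne n]
  have hbx : ∀ n, x ≤ b n := by
    intro n
    have h2 := ha (n + 1) (by omega)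
    rw [Nat.add_sub_cancel, ← hs n] at h2
    have h3 : 0 ≤ ⌊x / s n - x⌋ := by
      rw [Int.floor_nonneg, sub_nonneg, le_div_iff₀ (hspos n).1]
      nlinarith [(hspos n).2]
    have h4 : (0 : ℝ) ≤ (⌊x / s n - x⌋ : ℝ) := by exact_mod_cast h3
    rw [hb, h2]; push_cast; linarith
  simp only [← hb] at hp hq
  have hss : ∀ n, s n * s (n + 1) * (1 + x) ≤ x := by
    intro n
    have h0 := hspos n
    have h1 := hspos (n + 1)
    -- the difference equals `s n * (b n - x * s (n+1))`, and `b n ≥ x ≥ x * s (n+1)`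
    have h2 : 0 ≤ s n * (b n - x * s (n + 1)) :=
      mul_nonneg h0.1.le (by nlinarith [hbx n])
    linarith [hbeq n, h2]
  obtain ⟨e, he⟩ : ∃ e : ℕ → ℝ, ∀ n, e n = q (n + 1) * t - p (n + 1) := ⟨_, fun _ => rfl⟩
  have he0 : e 0 = t := by rw [he]; simp [hp0, hq0]
  have hestep : ∀ n, e (n + 1) = - s (n + 1) * e n := by
    intro n
    induction n with
    | zero =>
      have h := hbeq 0
      rw [hs0] at h
      rw [he0, he, hq, hp]
      simp only [zero_add, hp0, hq0, hpm1, hqm1] at h ⊢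
      linarith
    | succ k ih =>
      have h := hbeq (k + 1)
      have h1 : e (k + 2) = b (k + 1) * e (k + 1) + x * e k := by
        simp only [he]; rw [hq, hp]; ring
      rw [h1, ih, ← h]; ring
  have hqpos : ∀ n, 0 ≤ q n ∧ 0 < q (n + 1) := by
    intro n
    induction n with
    | zero => simp [hqm1, hq0]
    | succ k ih =>
      refine ⟨ih.2.le, ?_⟩
      rw [hq]
      have := mul_pos (hx0.trans_le (hbx k)) ih.2
      have := mul_nonneg hx0.le ih.1
      linarith
  have hqx : ∀ n, x * q (n + 1) ≤ q (n + 2) := by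
    intro n
    rw [hq]
    have := mul_le_mul_of_nonneg_right (hbx n) (hqpos n).2.le
    have := mul_nonneg hx0.le (hqpos n).1
    linarith
  have hq2 : ∀ n, x * (1 + x) * q (n + 1) ≤ q (n + 3) := by
    intro n
    rw [hq (n + 1)]
    have h1 := mul_le_mul_of_nonneg_right (hbx (n + 1)) (hqpos (n + 1)).2.le
    have h2 := mul_le_mul_of_nonneg_left (hqx n) hx0.le
    rw [show n + 1 + 1 = n + 2 from rfl] at *
    linarith
  have he2 : ∀ n, |e (n + 2)| * (1 + x) ≤ x * |e n| := by
    intro n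
    have h : e (n + 2) = s (n + 1) * s (n + 2) * e n := by
      rw [hestep (n + 1), hestep n]; ring
    rw [h, abs_mul, abs_of_pos (mul_pos (hspos _).1 (hspos _).1)]
    have := mul_le_mul_of_nonneg_right (hss (n + 1)) (abs_nonneg (e n))
    rw [show n + 1 + 1 = n + 2 from rfl] at this
    linarith
  have hmain : ∀ n, |e n| * (1 + x) ^ n ≤ q (n + 1) ∧
      |e (n + 1)| * (1 + x) ^ (n + 1) ≤ q (n + 2) := by
    intro n
    induction n with
    | zero =>
      constructor
      · rw [he0, abs_of_pos ht.1]; simp [hq0, ht.2.le]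
      · have h1 := hss 0
        have h2 := hqx 0
        simp only [zero_add, hs0, hq0, mul_one] at h1 h2
        rw [hestep 0, he0, abs_mul, abs_neg, abs_of_pos (hspos _).1, abs_of_pos ht.1]
        simp only [zero_add, pow_one]
        linarith
    | succ k ih =>
      refine ⟨ih.2, ?_⟩
      calc |e (k + 2)| * (1 + x) ^ (k + 2)
          = (|e (k + 2)| * (1 + x)) * (1 + x) ^ (k + 1) := by ring
        _ ≤ (x * |e k|) * (1 + x) ^ (k + 1) :=
            mul_le_mul_of_nonneg_right (he2 k) (by positivity)
        _ = x * (1 + x) * (|e k| * (1 + x) ^ k) := by ring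
        _ ≤ x * (1 + x) * q (k + 1) :=
            mul_le_mul_of_nonneg_left ih.1 (by positivity)
        _ ≤ q (k + 3) := hq2 k
  have hlim : Filter.Tendsto (fun n : ℕ => ((1 + x)⁻¹) ^ n) Filter.atTop (nhds 0) :=
    tendsto_pow_atTop_nhds_zero_of_lt_one (by positivity) (inv_lt_one_of_one_lt₀ (by linarith))
  rw [tendsto_iff_dist_tendsto_zero]
  refine squeeze_zero (fun _ => dist_nonneg) (fun n => ?_) hlim
  have hQ := (hqpos n).2
  have h1 : p (n + 1) / q (n + 1) - t = - (e n / q (n + 1)) := by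
    rw [he]; field_simp; ring
  rw [Real.dist_eq, h1, abs_neg, abs_div, abs_of_pos hQ, inv_pow, div_le_iff₀ hQ,
    ← div_eq_inv_mul, le_div_iff₀ (by positivity)]
  exact (hmain n).1
end

section
/- Let x ∈ (0,1) and define the sequence q : ℕ → ℝ by q_0 = 1, q_1 = x, and q_{n+2} = x·(q_{n+1} + q_n). Then: (i) for every integer m ≥ 2, q_{2m} > m·x^{m+1} + x^m; (ii) for every integer m ≥ 1, q_{2m+1} > (m+1)·x^{m+1}; and (iii) x^n / q_n² → 0 as n → ∞. -/
/-!
The weak inequalities `q (2m) ≥ m x^(m+1) + x^m` and `q (2m+1) ≥ (m+1) x^(m+1)` hold for every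
`m ≥ 0` (with equality at `m = 0`) and are proved by a joint induction. One more step of the
recurrence leaves a positive surplus, which gives the strict bounds. In both parities they imply
`q n ^ 2 ≥ (n x / 2)^2 x^n`, so that `x^n / q n ^ 2 = O(1 / n^2)`.
-/

theorem q_lower_bounds {x : ℝ} (hx : 0 < x) {q : ℕ → ℝ} (hq0 : q 0 = 1) (hq1 : q 1 = x)
    (hrec : ∀ n : ℕ, q (n + 2) = x * (q (n + 1) + q n)) (m : ℕ) :
    m * x ^ (m + 1) + x ^ m ≤ q (2 * m) ∧ (m + 1) * x ^ (m + 1) ≤ q (2 * m + 1) := by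
  induction m with
  | zero => simp [hq0, hq1]
  | succ k ih =>
    obtain ⟨h0, h1⟩ := ih
    have e2 : q (2 * (k + 1)) = x * (q (2 * k + 1) + q (2 * k)) := hrec (2 * k)
    have e3 : q (2 * (k + 1) + 1) = x * (q (2 * (k + 1)) + q (2 * k + 1)) := hrec (2 * k + 1)
    have h2 : (k + 1 : ℝ) * x ^ (k + 2) + x ^ (k + 1) ≤ q (2 * (k + 1)) := by
      have h := mul_le_mul_of_nonneg_left (add_le_add h1 h0) hx.le
      have hp : 0 ≤ (k : ℝ) * x ^ (k + 2) := by positivity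
      rw [e2]
      linear_combination h + hp
    refine ⟨by exact_mod_cast h2, ?_⟩
    have h := mul_le_mul_of_nonneg_left (add_le_add h2 h1) hx.le
    have hp : 0 ≤ (k + 1 : ℝ) * x ^ (k + 3) := by positivity
    rw [e3]
    push_cast
    linear_combination h + hp

/-- The two parity bounds merged into a single one, which is what the limit needs. -/
theorem q_sq_lower_bound {x : ℝ} (hx : 0 < x) (hx1 : x < 1) {q : ℕ → ℝ}
    (hq0 : q 0 = 1) (hq1 : q 1 = x)
    (hrec : ∀ n : ℕ, q (n + 2) = x * (q (n + 1) + q n)) (n : ℕ) :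
    (n * x / 2) ^ 2 * x ^ n ≤ q n ^ 2 := by
  obtain ⟨m, rfl | rfl⟩ := Nat.even_or_odd' n
  · have h0 := (q_lower_bounds hx hq0 hq1 hrec m).1
    have hp : 0 < x ^ m := by positivity
    calc ((2 * m : ℕ) * x / 2) ^ 2 * x ^ (2 * m) = (m * x ^ (m + 1)) ^ 2 := by push_cast; ring
      _ ≤ q (2 * m) ^ 2 := by gcongr; linarith
  · have h1 := (q_lower_bounds hx hq0 hq1 hrec m).2
    calc ((2 * m + 1 : ℕ) * x / 2) ^ 2 * x ^ (2 * m + 1)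
        = (m + 1 / 2) ^ 2 * x ^ (2 * m + 2) * x := by push_cast; ring
      _ ≤ (m + 1) ^ 2 * x ^ (2 * m + 2) * 1 := by gcongr; norm_num
      _ = ((m + 1) * x ^ (m + 1)) ^ 2 := by ring
      _ ≤ q (2 * m + 1) ^ 2 := by gcongr

/-- For x ∈ (0,1) and the denominator sequence q₀ = 1, q₁ = x,
q_{n+2} = x(q_{n+1} + q_n) (all digits equal to 1):
(i) q_{2m} > m·x^{m+1} + x^m for m ≥ 2; (ii) q_{2m+1} > (m+1)·x^{m+1} for m ≥ 1;
(iii) xⁿ/qₙ² → 0. -/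
theorem stmt11 (x : ℝ) (hx : x ∈ Set.Ioo (0 : ℝ) 1) (q : ℕ → ℝ)
    (hq0 : q 0 = 1) (hq1 : q 1 = x)
    (hrec : ∀ n : ℕ, q (n + 2) = x * (q (n + 1) + q n)) :
    (∀ m : ℕ, 2 ≤ m → q (2 * m) > m * x ^ (m + 1) + x ^ m) ∧
    (∀ m : ℕ, 1 ≤ m → q (2 * m + 1) > (m + 1) * x ^ (m + 1)) ∧
    Filter.Tendsto (fun n : ℕ => x ^ n / (q n) ^ 2) Filter.atTop (nhds 0) := by
  obtain ⟨hx0, hx1⟩ := hx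
  have key := q_lower_bounds hx0 hq0 hq1 hrec
  refine ⟨fun m hm => ?_, fun m hm => ?_, ?_⟩
  · obtain ⟨k, rfl⟩ : ∃ k, m = k + 1 := ⟨m - 1, by omega⟩
    have hk : (0 : ℝ) < k := by exact_mod_cast (by omega : 0 < k)
    have e : q (2 * (k + 1)) = x * (q (2 * k + 1) + q (2 * k)) := hrec (2 * k)
    have h := mul_le_mul_of_nonneg_left (add_le_add (key k).2 (key k).1) hx0.le
    have hp : 0 < (k : ℝ) * x ^ (k + 2) := by positivity
    rw [gt_iff_lt, e]
    push_cast
    linear_combination h + hp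
  · obtain ⟨k, rfl⟩ : ∃ k, m = k + 1 := ⟨m - 1, by omega⟩
    have e : q (2 * (k + 1) + 1) = x * (q (2 * (k + 1)) + q (2 * k + 1)) := hrec (2 * k + 1)
    have h := mul_le_mul_of_nonneg_left (add_le_add (key (k + 1)).1 (key k).2) hx0.le
    have hp : 0 < (k + 1 : ℝ) * x ^ (k + 3) := by positivity
    rw [gt_iff_lt, e]
    push_cast at h ⊢
    linear_combination h + hp
  · have hlim : Filter.Tendsto (fun n : ℕ => (2 / x * (1 / (n : ℝ))) ^ 2) Filter.atTop (nhds 0) := by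
      simpa using ((tendsto_one_div_atTop_nhds_zero_nat (𝕜 := ℝ)).const_mul (2 / x)).pow 2
    refine squeeze_zero' (Filter.Eventually.of_forall fun n => by positivity) ?_ hlim
    filter_upwards [Filter.eventually_gt_atTop 0] with n hn
    have hn' : (0 : ℝ) < n := by exact_mod_cast hn
    have hb := q_sq_lower_bound hx0 hx1 hq0 hq1 hrec n
    calc x ^ n / q n ^ 2 ≤ x ^ n / ((n * x / 2) ^ 2 * x ^ n) := by gcongr
      _ = (2 / x * (1 / (n : ℝ))) ^ 2 := by field_simp
end

section
/- Let (p,q) be any vertex of the Farey polynomial tree and let N be a positive integer. If α is a real number such that α < s for every real root s of q, and α satisfies p(α) + (α + N − 1)·q(α) = 0 (i.e. α is a pole of the vertex Φ1^{N−1}∘Φ0(p,q), whose denominator is (X + N − 1)q + p), then α < −N. In particular, the smallest pole of Φ1^{N−1}∘Φ0(p,q) tends to −∞ as N → ∞. -/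
/-!
Write `f = p / q`. Away from `0`, both cases of the definitions say that `Φ0` replaces `f` by
`x / (x + f)` and `Φ1` replaces it by `x f / (x + f)`, the new denominator vanishing at a negative
`x` exactly when `r(x) = x q(x) + p(x)` does. If `α` lies to the left of all roots of `q`, the pole
equation reads `f(α) = 1 - N - α`, so `α < -N` is the inequality `f(α) > 1`. That `f > 1` to the
left of all poles of `f` is proved along the tree, together with two facts: `q` has a negative
root, and `f → 1` at `-∞` (`FareyGood`).

In the inductive step (`FareyGood.left_of_roots`), `r / q = x + f` is negative near `-∞`. If `r`
had no root up to and including the smallest root `s` of `q`, then `r q < 0` and `p q > 0` on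
`(-∞, s)`, so `r p < 0` there and `r(s) p(s) ≤ 0` in the limit; but `r(s) = p(s)`, so `r(s) = 0`.
Hence to the left of all roots of `r` there is no root of `q`, and `x + f < 0`. Since `f > 1`, this
gives `x / (x + f) > 1` and `x f / (x + f) > 1`.
-/

open Polynomial

open Filter Topology

/-- The induction invariant on the real functions `P`, `Q` given by the numerator and denominator
of a vertex. "To the left of all roots of `Q`" is encoded as `∀ y ≤ x, Q y ≠ 0`. -/
structure FareyGood (P Q : ℝ → ℝ) : Prop where
  contP : Continuous P
  contQ : Continuous Q
  root : ∃ s < 0, Q s = 0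
  one_lt : ∀ x, (∀ y ≤ x, Q y ≠ 0) → 1 < P x / Q x
  tendsto : Tendsto (fun x => P x / Q x) atBot (𝓝 1)

lemma neg_of_ne_zero {g : ℝ → ℝ} (hg : Continuous g) {S : Set ℝ} (hS : S.OrdConnected)
    (h0 : ∀ y ∈ S, g y ≠ 0) {x y : ℝ} (hx : x ∈ S) (hy : y ∈ S) (hgx : g x < 0) : g y < 0 := by
  by_contra! hgy
  obtain ⟨z, hz, hz0⟩ := hS.isPreconnected.intermediate_value hx hy hg.continuousOn
    (show (0 : ℝ) ∈ Set.Icc (g x) (g y) from ⟨hgx.le, hgy⟩)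
  exact h0 z hz hz0

namespace FareyGood

variable {P Q : ℝ → ℝ}

lemma eventually_ne (h : FareyGood P Q) : ∀ᶠ x in atBot, Q x ≠ 0 := by
  -- `P x / Q x` takes the value `0` at roots of `Q`, and so it is not close to `1` there.
  filter_upwards [h.tendsto.eventually_ne one_ne_zero] with x hx hQ
  exact hx (by simp [hQ])

lemma eventually_neg (h : FareyGood P Q) :
    ∀ᶠ x in atBot, (x * Q x + P x) * Q x < 0 := by
  filter_upwards [h.tendsto.eventually_lt_const (show (1 : ℝ) < 2 by norm_num), h.eventually_ne,
    eventually_lt_atBot (-2 : ℝ)] with x hx hQ hx2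
  have h1 : (x * Q x + P x) * Q x = (x + P x / Q x) * Q x ^ 2 := by field_simp
  rw [h1]
  exact mul_neg_of_neg_of_pos (by linarith) (by positivity)

/-- To the left of all roots of `x Q + P` there are no roots of `Q`, and `x + P / Q` is still
negative, as it is near `-∞`. -/
lemma left_of_roots (h : FareyGood P Q) {a : ℝ} (ha : ∀ y ≤ a, y * Q y + P y ≠ 0) :
    (∀ y ≤ a, Q y ≠ 0) ∧ a + P a / Q a < 0 := by
  have cP := h.contP
  have cQ := h.contQ
  have cRQ : Continuous fun x => (x * Q x + P x) * Q x := by fun_prop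
  have hQ : ∀ y ≤ a, Q y ≠ 0 := by
    intro t hta htQ
    obtain ⟨b, hb⟩ := eventually_atBot.1 h.eventually_ne
    -- `s` is the smallest root of `Q`.
    have hbdd : BddBelow {y | Q y = 0} := ⟨b, fun y hy => by
      by_contra! hyb
      exact hb y hyb.le hy⟩
    have hsQ : Q (sInf {y | Q y = 0}) = 0 :=
      (isClosed_eq cQ continuous_const).csInf_mem ⟨t, htQ⟩ hbdd
    have hst : sInf {y | Q y = 0} ≤ t := csInf_le hbdd htQ
    have hmin : ∀ y < sInf {y | Q y = 0}, Q y ≠ 0 := fun y hy hy0 =>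
      absurd (csInf_le hbdd (show y ∈ {y | Q y = 0} from hy0)) (not_le.2 hy)
    generalize sInf {y | Q y = 0} = s at *
    obtain ⟨z, hz, hzs⟩ := (h.eventually_neg.and (eventually_lt_atBot s)).exists
    have hRP : ∀ x < s, (x * Q x + P x) * P x ≤ 0 := by
      intro x hx
      have h1 : (x * Q x + P x) * Q x < 0 :=
        neg_of_ne_zero cRQ Set.ordConnected_Iio
          (fun y hy => mul_ne_zero (ha y ((le_of_lt hy).trans (hst.trans hta))) (hmin y hy))
          (show z ∈ Set.Iio s from hzs) hx hz
      have h2 := h.one_lt x fun y hy => hmin y (hy.trans_lt hx)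
      have hQx := hmin x hx
      have h3 : (x * Q x + P x) * P x = (x * Q x + P x) * Q x * (P x / Q x) := by field_simp
      rw [h3]
      exact mul_nonpos_of_nonpos_of_nonneg h1.le (by linarith)
    have hs : (s * Q s + P s) * P s ≤ 0 := by
      have hc : Continuous fun x => (x * Q x + P x) * P x := by fun_prop
      exact le_of_tendsto (hc.continuousWithinAt (s := Set.Iio s) (x := s))
        (eventually_nhdsWithin_of_forall hRP)
    have hRs := ha s (hst.trans hta)
    rw [hsQ, mul_zero, zero_add] at hs hRs
    exact absurd hs (not_le.2 (mul_self_pos.2 hRs))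
  refine ⟨hQ, ?_⟩
  obtain ⟨z, hz, hza⟩ := (h.eventually_neg.and (eventually_lt_atBot a)).exists
  have h1 : (a * Q a + P a) * Q a < 0 :=
    neg_of_ne_zero cRQ Set.ordConnected_Iic (fun y hy => mul_ne_zero (ha y hy) (hQ y hy))
      (show z ∈ Set.Iic a from hza.le) (Set.mem_Iic.2 le_rfl) hz
  have hQa := hQ a le_rfl
  have h2 : (a * Q a + P a) * Q a = (a + P a / Q a) * Q a ^ 2 := by field_simp
  rw [h2] at h1
  exact neg_of_mul_neg_left h1 (by positivity)

/-- The common form of the two steps of the tree: `c` is `1` or `1 / x` according to the case in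
the definition of `Φ0` and `Φ1`, and `P'` comes from `Φ0` or from `Φ1`. -/
lemma step (h : FareyGood P Q) {P' Q' c : ℝ → ℝ} (cP : Continuous P') (cQ : Continuous Q')
    (hc : ∀ x < 0, c x ≠ 0) (hQ' : ∀ x < 0, Q' x = c x * (x * Q x + P x))
    (hP' : (∀ x < 0, P' x = c x * (x * Q x)) ∨ (∀ x < 0, P' x = c x * (x * P x))) :
    FareyGood P' Q' := by
  obtain ⟨s, hs0, hs⟩ := h.root
  have hroot : ∃ s < 0, Q' s = 0 := by
    by_contra! hno
    refine (h.left_of_roots (a := s) fun y hy hy0 => ?_).1 s le_rfl hs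
    have hy' : y < 0 := hy.trans_lt hs0
    exact hno y hy' (by rw [hQ' y hy', hy0, mul_zero])
  have hq0 : ∀ x < 0, Q x ≠ 0 → P' x / Q' x = 1 / (1 + P x / Q x / x) ∨
      P' x / Q' x = (P x / Q x) / (1 + P x / Q x / x) := by
    intro x hx hQx
    have hcx := hc x hx
    have hx0 := hx.ne
    have h1 : 1 + P x / Q x / x = (x * Q x + P x) / (x * Q x) := by field_simp
    rw [h1, hQ' x hx]
    refine hP'.imp (fun hP => ?_) (fun hP => ?_)
    · rw [hP x hx, mul_div_mul_left _ _ hcx, one_div_div]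
    · rw [hP x hx, mul_div_mul_left _ _ hcx, div_div_eq_mul_div]
      congr 1
      field_simp
  refine ⟨cP, cQ, hroot, fun x hx => ?_, ?_⟩
  · obtain ⟨t, ht0, ht⟩ := hroot
    have hx0 : x < 0 := lt_trans (not_le.1 fun htx => hx t htx ht) ht0
    obtain ⟨hQ, hneg⟩ := h.left_of_roots (a := x) fun y hy hy0 =>
      hx y hy (by rw [hQ' y (hy.trans_lt hx0), hy0, mul_zero])
    have hf := h.one_lt x hQ
    have hpos : 0 < 1 + P x / Q x / x := by
      have h1 : 1 + P x / Q x / x = (x + P x / Q x) / x := by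
        have := hx0.ne
        rw [add_div, div_self this]
      rw [h1]
      exact div_pos_of_neg_of_neg hneg hx0
    have hlt : P x / Q x / x < 0 := div_neg_of_pos_of_neg (by linarith) hx0
    rcases hq0 x hx0 (hQ x le_rfl) with h1 | h1 <;> rw [h1, one_lt_div hpos] <;> linarith
  · have hd : Tendsto (fun x => 1 + P x / Q x / x) atBot (𝓝 1) := by
      simpa using (h.tendsto.div_atBot tendsto_id).const_add 1
    have h1 : Tendsto (fun x => 1 / (1 + P x / Q x / x)) atBot (𝓝 1) := by
      simpa using hd.inv₀ one_ne_zero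
    have h2 : Tendsto (fun x => (P x / Q x) / (1 + P x / Q x / x)) atBot (𝓝 1) := by
      have h3 := h.tendsto.div hd one_ne_zero
      rwa [div_one] at h3
    -- Each value of the new quotient is one of the two, hence between their minimum and maximum.
    have hmin := h1.min h2
    have hmax := h1.max h2
    rw [min_self] at hmin
    rw [max_self] at hmax
    refine tendsto_of_tendsto_of_tendsto_of_le_of_le' hmin hmax ?_ ?_ <;>
      filter_upwards [h.eventually_ne, eventually_lt_atBot (0 : ℝ)] with x hQ hx <;>
      rcases hq0 x hx hQ with h3 | h3 <;> rw [h3] <;> simp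

end FareyGood

/-- Evaluation of an integer polynomial over `ℝ`. -/
noncomputable def evR (p : ℤ[X]) (x : ℝ) : ℝ := (p.map (Int.castRingHom ℝ)).eval x

lemma continuous_evR (p : ℤ[X]) : Continuous (evR p) :=
  (p.map (Int.castRingHom ℝ)).continuous

lemma evR_divX {p : ℤ[X]} (hp : p.coeff 0 = 0) (x : ℝ) : x * evR p.divX x = evR p x := by
  have h := congrArg (fun r => evR r x) (Polynomial.X_mul_divX_add p)
  simpa [hp, evR] using h

lemma fareyGood_root : FareyGood (evR X) (evR (X + 1)) := by
  have hX : evR X = fun x => x := by ext; simp [evR]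
  have hX1 : evR (X + 1) = fun x => x + 1 := by ext; simp [evR]
  rw [hX, hX1]
  refine ⟨by fun_prop, by fun_prop, ⟨-1, by norm_num, by norm_num⟩, fun x hx => ?_, ?_⟩
  · have h1 : x < -1 := not_le.1 fun h => hx (-1) h (by norm_num)
    rw [lt_div_iff_of_neg (by linarith)]
    linarith
  · have h1 : Tendsto (fun x : ℝ => 1 - (x + 1)⁻¹) atBot (𝓝 1) := by
      simpa using (tendsto_inv_atBot_zero.comp
        (tendsto_atBot_add_const_right atBot (1 : ℝ) tendsto_id)).const_sub 1
    refine h1.congr' ?_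
    filter_upwards [eventually_lt_atBot (-1 : ℝ)] with x hx
    have : x + 1 ≠ 0 := by linarith
    field_simp
    ring

lemma fareyGood_step {u v : ℤ[X] × ℤ[X]} (h : FareyGood (evR u.1) (evR u.2))
    (huv : FareyStep u v) : FareyGood (evR v.1) (evR v.2) := by
  by_cases hu : u.1.coeff 0 = 0
  · refine h.step (c := fun x => x⁻¹) (continuous_evR _) (continuous_evR _)
      (fun x hx => inv_ne_zero hx.ne) (fun x hx => ?_) ?_
    · have hv : v.2 = u.2 + u.1.divX := by rcases huv with rfl | rfl <;> simp [Phi0, Phi1, hu]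
      rw [hv, ← evR_divX hu, ← mul_add, inv_mul_cancel_left₀ hx.ne]
      simp [evR]
    · refine huv.imp ?_ ?_ <;> rintro rfl x hx <;> rw [inv_mul_cancel_left₀ hx.ne] <;>
        simp [Phi0, Phi1, hu]
  · refine h.step (c := fun _ => 1) (continuous_evR _) (continuous_evR _)
      (fun x hx => one_ne_zero) (fun x hx => ?_) ?_
    · have hv : v.2 = X * u.2 + u.1 := by rcases huv with rfl | rfl <;> simp [Phi0, Phi1, hu]
      simp [hv, evR]
    · refine huv.imp ?_ ?_ <;> rintro rfl x hx <;> simp [Phi0, Phi1, hu, evR]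

lemma fareyGood_of_vertex {pq : ℤ[X] × ℤ[X]} (h : IsFareyVertex pq) :
    FareyGood (evR pq.1) (evR pq.2) := by
  unfold IsFareyVertex at h
  induction h with
  | refl => exact fareyGood_root
  | tail _ hs ih => exact fareyGood_step ih hs

/-- For any vertex (p,q) and positive integer N, any pole α of Φ1^{N-1}∘Φ0(p,q)
(i.e. a root of (X+N-1)q + p) lying to the left of all real roots of q satisfies
α < -N. -/
theorem stmt12 (pq : Polynomial ℤ × Polynomial ℤ) (h : IsFareyVertex pq)
    (N : ℕ) (hN : 1 ≤ N) (α : ℝ)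
    (hleft : ∀ s : ℝ, (pq.2.map (Int.castRingHom ℝ)).eval s = 0 → α < s)
    (hpole : (pq.1.map (Int.castRingHom ℝ)).eval α +
      (α + N - 1) * (pq.2.map (Int.castRingHom ℝ)).eval α = 0) :
    α < -(N : ℝ) := by
  have hne : ∀ y ≤ α, evR pq.2 y ≠ 0 := fun y hy hy0 => absurd (hleft y hy0) (not_lt.2 hy)
  have h1 := (fareyGood_of_vertex h).one_lt α hne
  have hp : evR pq.1 α + (α + N - 1) * evR pq.2 α = 0 := hpole
  have h2 : evR pq.1 α / evR pq.2 α = -(α + N - 1) := by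
    rw [div_eq_iff (hne α le_rfl)]
    linarith
  linarith
end

section
/- Let x ≥ 1 be a real number. Then the set of values of the backward Farey tree at x, namely { w(1/(x+1)) : w a finite composition of the maps ψ₀ and ψ₁ }, is dense in (0,1). -/
/-!
Call an interval `(a, b)` with `0 ≤ a ≤ b ≤ 1` a gap if it contains no tree value. The pairs
`(a, b)` giving gaps form a compact set, so there is a longest gap. It does not contain the root
`1 / (x + 1)`, hence lies in the image `[0, 1 / (x + 1)]` of `psi1` or in the image
`[1 / (x + 1), 1]` of `psi0`. The set of tree values is stable under both branches, so the preimage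
of the gap under that branch is again a gap. For `x ≥ 1` both branches strictly shorten every
nondegenerate subinterval of `[0, 1]`, so the preimage is strictly longer unless the gap is
degenerate. Hence every gap is degenerate, which is density.
-/

/-- The inverse branch ψ₀ of the backward x-Farey map. -/
noncomputable def psi0 (x t : ℝ) : ℝ := ((x - 1) * t + 1) / ((x + 1) - t)

/-- The inverse branch ψ₁ of the backward x-Farey map. -/
noncomputable def psi1 (x t : ℝ) : ℝ := t / (x + t)

/-- The value of the backward Farey tree at x on the word w : the composition of
ψ₀'s and ψ₁'s described by w (applied right-to-left) evaluated at the root 1/(x+1). -/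
noncomputable def backVal (x : ℝ) (w : List Bool) : ℝ :=
  w.foldr (fun b y => if b then psi1 x y else psi0 x y) (1 / (x + 1))

/-- `(a, b)` encodes a subinterval of `[0, 1]` whose interior misses `S`; degenerate intervals
`a = b` are included. -/
def IsGap (S : Set ℝ) (p : ℝ × ℝ) : Prop :=
  0 ≤ p.1 ∧ p.1 ≤ p.2 ∧ p.2 ≤ 1 ∧ ∀ s ∈ S, s ≤ p.1 ∨ p.2 ≤ s

lemma isCompact_isGap (S : Set ℝ) : IsCompact {p | IsGap S p} := by
  refine (isCompact_Icc (a := ((0, 0) : ℝ × ℝ)) (b := (1, 1))).of_isClosed_subset ?_ ?_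
  · have h : {p | IsGap S p} = {p : ℝ × ℝ | 0 ≤ p.1} ∩ ({p | p.1 ≤ p.2} ∩ ({p | p.2 ≤ 1} ∩
        ⋂ s ∈ S, ({p | s ≤ p.1} ∪ {p | p.2 ≤ s}))) := by
      ext p
      simp [IsGap]
    rw [h]
    refine (isClosed_le (by fun_prop) (by fun_prop)).inter
      ((isClosed_le (by fun_prop) (by fun_prop)).inter
      ((isClosed_le (by fun_prop) (by fun_prop)).inter
      (isClosed_biInter fun s _ => ?_)))
    exact (isClosed_le (by fun_prop) (by fun_prop)).union (isClosed_le (by fun_prop) (by fun_prop))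
  · rintro ⟨a, b⟩ ⟨h0, hab, h1, -⟩
    simp only at h0 hab h1
    simp only [Set.mem_Icc, Prod.mk_le_mk]
    exact ⟨⟨h0, h0.trans hab⟩, hab.trans h1, h1⟩

/-- Pulling a nondegenerate gap to the left of the root back along `psi1` lengthens it. -/
lemma exists_longer_left {x : ℝ} (hx : 1 ≤ x) {S : Set ℝ} (hS : ∀ s ∈ S, psi1 x s ∈ S)
    {a b : ℝ} (h : IsGap S (a, b)) (hab : a < b) (hb : b ≤ 1 / (x + 1)) :
    ∃ q, IsGap S q ∧ b - a < q.2 - q.1 := by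
  obtain ⟨h0, -, h1, hg⟩ := h
  simp only at h0 h1 hg
  rw [le_div_iff₀ (by linarith)] at hb
  have hb1 : 0 < 1 - b := by nlinarith
  have ha1 : 0 < 1 - a := by linarith
  have hlen : b - a < x * b / (1 - b) - x * a / (1 - a) := by
    have e : x * b / (1 - b) - x * a / (1 - a) = x * (b - a) / ((1 - b) * (1 - a)) := by
      field_simp
      ring
    rw [e, lt_div_iff₀ (by positivity)]
    have : (1 - b) * (1 - a) < 1 := by nlinarith
    nlinarith
  have hpos : 0 ≤ x * a / (1 - a) := by positivity
  refine ⟨(x * a / (1 - a), x * b / (1 - b)), ⟨hpos, by simp only; linarith, ?_, ?_⟩, hlen⟩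
  · simp only
    rw [div_le_one hb1]
    linarith
  · intro s hs
    by_contra! hc
    obtain ⟨hc1, hc2⟩ := hc
    simp only at hc1 hc2
    have hxs : 0 < x + s := by linarith
    rw [div_lt_iff₀ ha1] at hc1
    rw [lt_div_iff₀ hb1] at hc2
    rcases hg _ (hS s hs) with h | h
    · rw [psi1, div_le_iff₀ hxs] at h
      linarith
    · rw [psi1, le_div_iff₀ hxs] at h
      linarith

/-- Pulling a nondegenerate gap to the right of the root back along `psi0` lengthens it. -/
lemma exists_longer_right {x : ℝ} (hx : 1 ≤ x) {S : Set ℝ} (hS : ∀ s ∈ S, psi0 x s ∈ S)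
    {a b : ℝ} (h : IsGap S (a, b)) (hab : a < b) (ha : 1 / (x + 1) ≤ a) :
    ∃ q, IsGap S q ∧ b - a < q.2 - q.1 := by
  obtain ⟨h0, -, h1, hg⟩ := h
  simp only at h0 h1 hg
  have ha0 : 0 < a := lt_of_lt_of_le (by positivity) ha
  rw [div_le_iff₀ (by linarith)] at ha
  have ha1 : 0 < x - 1 + a := by linarith
  have hb1 : 0 < x - 1 + b := by linarith
  have hlen : b - a < (b * (x + 1) - 1) / (x - 1 + b) - (a * (x + 1) - 1) / (x - 1 + a) := by
    have e : (b * (x + 1) - 1) / (x - 1 + b) - (a * (x + 1) - 1) / (x - 1 + a)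
        = x ^ 2 * (b - a) / ((x - 1 + b) * (x - 1 + a)) := by
      field_simp
      ring
    rw [e, lt_div_iff₀ (by positivity)]
    have : (x - 1 + b) * (x - 1 + a) < x ^ 2 := by nlinarith
    nlinarith
  have hpos : 0 ≤ (a * (x + 1) - 1) / (x - 1 + a) := div_nonneg (by linarith) ha1.le
  have hle : (b * (x + 1) - 1) / (x - 1 + b) ≤ 1 := by
    rw [div_le_one hb1]
    nlinarith
  refine ⟨((a * (x + 1) - 1) / (x - 1 + a), (b * (x + 1) - 1) / (x - 1 + b)),
    ⟨hpos, by simp only; linarith, hle, ?_⟩, hlen⟩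
  intro s hs
  by_contra! hc
  obtain ⟨hc1, hc2⟩ := hc
  simp only at hc1 hc2
  have hxs : 0 < x + 1 - s := by linarith
  rw [div_lt_iff₀ ha1] at hc1
  rw [lt_div_iff₀ hb1] at hc2
  rcases hg _ (hS s hs) with h | h
  · rw [psi0, div_le_iff₀ hxs] at h
    linarith
  · rw [psi0, le_div_iff₀ hxs] at h
    linarith

/-- For x ≥ 1, the set of values of the backward Farey tree at x is dense in (0,1). -/
theorem stmt14 (x : ℝ) (hx : 1 ≤ x) :
    Set.Ioo (0 : ℝ) 1 ⊆ closure {t : ℝ | ∃ w : List Bool, backVal x w = t} := by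
  set S : Set ℝ := {t : ℝ | ∃ w : List Bool, backVal x w = t} with hSdef
  have hroot : 1 / (x + 1) ∈ S := ⟨[], rfl⟩
  have hS0 : ∀ s ∈ S, psi0 x s ∈ S := by
    rintro _ ⟨w, rfl⟩
    exact ⟨false :: w, by simp [backVal]⟩
  have hS1 : ∀ s ∈ S, psi1 x s ∈ S := by
    rintro _ ⟨w, rfl⟩
    exact ⟨true :: w, by simp [backVal]⟩
  obtain ⟨⟨a, b⟩, hgap, hmax⟩ := (isCompact_isGap S).exists_isMaxOn
    ⟨(0, 0), by simp [IsGap, le_total]⟩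
    (f := fun p : ℝ × ℝ => p.2 - p.1) (by fun_prop)
  have hba : b ≤ a := by
    by_contra! hab
    obtain ⟨q, hq, hlt⟩ : ∃ q, IsGap S q ∧ b - a < q.2 - q.1 := by
      rcases hgap.2.2.2 _ hroot with h | h
      · exact exists_longer_right hx hS0 hgap hab h
      · exact exists_longer_left hx hS1 hgap hab h
    exact absurd (hmax hq) (not_le.mpr hlt)
  rintro t ⟨ht0, ht1⟩
  rw [Metric.mem_closure_iff]
  intro ε hε
  by_contra! hfar
  have hg : IsGap S (max 0 (t - ε), min 1 (t + ε)) := by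
    refine ⟨le_max_left _ _, ?_, min_le_left _ _, fun s hs => ?_⟩
    · exact (max_le ht0.le (by linarith)).trans (le_min ht1.le (by linarith))
    · have := hfar s hs
      rw [Real.dist_eq, le_abs] at this
      rcases this with h | h
      · exact Or.inl (le_max_of_le_right (by linarith))
      · exact Or.inr (min_le_of_right_le (by linarith))
  have hle : min 1 (t + ε) - max 0 (t - ε) ≤ b - a := hmax hg
  have h1 : max 0 (t - ε) < t := max_lt ht0 (by linarith)
  have h2 : t < min 1 (t + ε) := lt_min ht1 (by linarith)
  linarith
end

section
/- Let x > 0 be a real number. Then the map sending a finite word w ∈ {0,1}* to the real number obtained by applying the corresponding composition of ψ₀ and ψ₁ to 1/(x+1) is injective: distinct words yield distinct values. -/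
theorem psi0_gt {x t : ℝ} (hx : 0 < x) (h0 : 0 < t) (h1 : t < 1) : 1 / (x + 1) < psi0 x t := by
  unfold psi0
  rw [div_lt_div_iff₀ (by linarith) (by linarith)]
  nlinarith [mul_pos (mul_pos hx hx) h0]

theorem psi0_lt_one {x t : ℝ} (hx : 0 < x) (h1 : t < 1) : psi0 x t < 1 := by
  unfold psi0
  rw [div_lt_one (by linarith)]
  nlinarith [mul_pos hx (sub_pos.2 h1)]

theorem psi1_pos {x t : ℝ} (hx : 0 < x) (h0 : 0 < t) : 0 < psi1 x t := by
  unfold psi1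
  positivity

theorem psi1_lt {x t : ℝ} (hx : 0 < x) (h0 : 0 < t) (h1 : t < 1) : psi1 x t < 1 / (x + 1) := by
  unfold psi1
  rw [div_lt_div_iff₀ (by linarith) (by linarith)]
  nlinarith [mul_pos hx (sub_pos.2 h1)]

theorem psi0_inj {x s t : ℝ} (hx : 0 < x) (hs : s < 1) (ht : t < 1)
    (h : psi0 x s = psi0 x t) : s = t := by
  unfold psi0 at h
  rw [div_eq_div_iff (by linarith) (by linarith)] at h
  -- The determinant of `ψ₀` is `(x - 1) * (x + 1) + 1 = x ^ 2`.
  exact mul_left_cancel₀ (pow_pos hx 2).ne' (by linarith)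

theorem psi1_inj {x s t : ℝ} (hx : 0 < x) (hs : 0 < s) (ht : 0 < t)
    (h : psi1 x s = psi1 x t) : s = t := by
  unfold psi1 at h
  rw [div_eq_div_iff (by linarith) (by linarith)] at h
  exact mul_left_cancel₀ hx.ne' (by linarith)

theorem backVal_nil (x : ℝ) : backVal x [] = 1 / (x + 1) := rfl

theorem backVal_false (x : ℝ) (w : List Bool) :
    backVal x (false :: w) = psi0 x (backVal x w) := by
  simp [backVal]

theorem backVal_true (x : ℝ) (w : List Bool) :
    backVal x (true :: w) = psi1 x (backVal x w) := by
  simp [backVal]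

theorem backVal_mem {x : ℝ} (hx : 0 < x) (w : List Bool) :
    0 < backVal x w ∧ backVal x w < 1 := by
  have hr : 0 < 1 / (x + 1) := by positivity
  have hr1 : 1 / (x + 1) < 1 := by rw [div_lt_one (by linarith)]; linarith
  induction w with
  | nil => exact ⟨hr, hr1⟩
  | cons b w ih =>
    obtain ⟨h0, h1⟩ := ih
    cases b
    · rw [backVal_false]
      exact ⟨hr.trans (psi0_gt hx h0 h1), psi0_lt_one hx h1⟩
    · rw [backVal_true]
      exact ⟨psi1_pos hx h0, (psi1_lt hx h0 h1).trans hr1⟩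

theorem backVal_false_gt {x : ℝ} (hx : 0 < x) (w : List Bool) :
    1 / (x + 1) < backVal x (false :: w) := by
  rw [backVal_false]
  exact psi0_gt hx (backVal_mem hx w).1 (backVal_mem hx w).2

theorem backVal_true_lt {x : ℝ} (hx : 0 < x) (w : List Bool) :
    backVal x (true :: w) < 1 / (x + 1) := by
  rw [backVal_true]
  exact psi1_lt hx (backVal_mem hx w).1 (backVal_mem hx w).2

/-- For x > 0, distinct words in {ψ₀, ψ₁}* yield distinct values of the backward
Farey tree at x. -/
theorem stmt15 (x : ℝ) (hx : 0 < x) : Function.Injective (backVal x) := by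
  intro v
  induction v with
  | nil =>
    rintro (_ | ⟨_ | _, w⟩) h
    · rfl
    · exact absurd h (backVal_false_gt hx w).ne
    · exact absurd h (backVal_true_lt hx w).ne'
  | cons b v ih =>
    rintro (_ | ⟨c, w⟩) h
    · cases b
      · exact absurd h (backVal_false_gt hx v).ne'
      · exact absurd h (backVal_true_lt hx v).ne
    · cases b <;> cases c
      · rw [backVal_false, backVal_false] at h
        rw [ih (psi0_inj hx (backVal_mem hx v).2 (backVal_mem hx w).2 h)]
      · exact absurd h ((backVal_true_lt hx w).trans (backVal_false_gt hx v)).ne'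
      · exact absurd h ((backVal_true_lt hx v).trans (backVal_false_gt hx w)).ne
      · rw [backVal_true, backVal_true] at h
        rw [ih (psi1_inj hx (backVal_mem hx v).1 (backVal_mem hx w).1 h)]
end

section
/- Let x ∈ (0,1). Then no value of the backward Farey tree at x lies in the interval (0, 1−x); that is, for every finite composition w of ψ₀ and ψ₁, the value w(1/(x+1)) is not in (0, 1−x). Consequently the set of values of the backward Farey tree at x is not dense in (0,1). -/
theorem psi0_mem_Icc {x t : ℝ} (hx : x ∈ Set.Ioo (0 : ℝ) 1) (ht : t ∈ Set.Icc (1 - x) 1) :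
    psi0 x t ∈ Set.Icc (1 - x) 1 := by
  obtain ⟨h0, h1⟩ := hx
  obtain ⟨ht0, ht1⟩ := ht
  have hd : 0 < x + 1 - t := by linarith
  unfold psi0
  constructor
  · -- After clearing the denominator the difference of the two sides is `x ^ 2`.
    rw [le_div_iff₀ hd]
    nlinarith [sq_nonneg x]
  · -- After clearing the denominator the difference of the two sides is `x * (1 - t)`.
    rw [div_le_one hd]
    nlinarith

theorem psi1_mem_Icc {x t : ℝ} (hx : x ∈ Set.Ioo (0 : ℝ) 1) (ht : t ∈ Set.Icc (1 - x) 1) :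
    psi1 x t ∈ Set.Icc (1 - x) 1 := by
  obtain ⟨h0, h1⟩ := hx
  obtain ⟨ht0, ht1⟩ := ht
  have hd : 0 < x + t := by linarith
  unfold psi1
  constructor
  · -- After clearing the denominator the difference of the two sides is `x * (t - (1 - x))`.
    rw [le_div_iff₀ hd]
    nlinarith
  · rw [div_le_one hd]
    linarith

theorem backVal_mem_Icc {x : ℝ} (hx : x ∈ Set.Ioo (0 : ℝ) 1) (w : List Bool) :
    backVal x w ∈ Set.Icc (1 - x) 1 := by
  induction w with
  | nil =>
    obtain ⟨h0, h1⟩ := hx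
    have hd : 0 < x + 1 := by linarith
    change 1 / (x + 1) ∈ Set.Icc (1 - x) 1
    constructor
    · rw [le_div_iff₀ hd]
      nlinarith [sq_nonneg x]
    · rw [div_le_one hd]
      linarith
  | cons b w ih =>
    change (if b then psi1 x (backVal x w) else psi0 x (backVal x w)) ∈ Set.Icc (1 - x) 1
    split_ifs
    · exact psi1_mem_Icc hx ih
    · exact psi0_mem_Icc hx ih

/-- For x ∈ (0,1), no value of the backward Farey tree at x lies in (0, 1-x);
consequently the set of its values is not dense in (0,1). -/
theorem stmt16 (x : ℝ) (hx : x ∈ Set.Ioo (0 : ℝ) 1) :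
    (∀ w : List Bool, backVal x w ∉ Set.Ioo (0 : ℝ) (1 - x)) ∧
    ¬ Set.Ioo (0 : ℝ) 1 ⊆ closure {t : ℝ | ∃ w : List Bool, backVal x w = t} := by
  refine ⟨fun w hw => absurd (backVal_mem_Icc hx w).1 (not_le.mpr hw.2), fun h => ?_⟩
  have hsub : closure {t : ℝ | ∃ w : List Bool, backVal x w = t} ⊆ Set.Icc (1 - x) 1 := by
    refine closure_minimal ?_ isClosed_Icc
    rintro t ⟨w, rfl⟩
    exact backVal_mem_Icc hx w
  obtain ⟨h0, h1⟩ := hx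
  have hmem : (1 - x) / 2 ∈ Set.Ioo (0 : ℝ) 1 := ⟨by linarith, by linarith⟩
  have := (hsub (h hmem)).1
  linarith
end

section
/- Let x ≥ 1 be a real number and let t ∈ (0,1) be such that S_x^n(t) ≠ 0 for all n ∈ ℕ. Define digits a_n = ⌊x/(1 − S_x^{n−1}(t)) − x⌋ + 1 for n ≥ 1, and sequences p_n, q_n by p_0 = 1, p_1 = a_1, q_0 = 1, q_1 = a_1 + x, and p_n = (x + a_n)·p_{n−1} − x·p_{n−2}, q_n = (x + a_n)·q_{n−1} − x·q_{n−2} for n ≥ 2. Then the backward continued-fraction convergents p_n/q_n converge to t as n → ∞. -/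
/-!
Put `s n = 1 - S_x^n(t)`, which lies in `(0, 1)`. The definition of the digits says
`s n * (x + a (n + 1) - s (n + 1)) = x`, so the linear form `t * q n - p n`, which obeys the same
three-term recurrence as `p` and `q`, satisfies the one-step recurrence
`t * q (n + 1) - p (n + 1) = s (n + 1) * (t * q n - p n)`. Hence its absolute value stays below `1`.
Since the digits are at least `1` and `x ≥ 1`, the increments of `q` are at least `1`, so
`q n ≥ n + 1`, and the error `|p n / q n - t|` is at most `1 / (n + 1)`.
-/

/-- The backward x-Gauss map `S_x(t) = (x/(1-t) - x) - ⌊x/(1-t) - x⌋`. -/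
noncomputable def Smap (x : ℝ) (t : ℝ) : ℝ := Int.fract (x / (1 - t) - x)

/-- The sequence `q` has increments at least `1`: for `x, a ≥ 1` the recurrence gives
`q (n + 2) - q (n + 1) ≥ x * (q (n + 1) - q n)`. -/
lemma denominators_grow {x : ℝ} (hx : 1 ≤ x) {a : ℕ → ℤ} (ha : ∀ n, 1 ≤ a (n + 1)) {q : ℕ → ℝ}
    (hq0 : q 0 = 1) (hq1 : q 1 = (a 1 : ℝ) + x)
    (hq : ∀ n : ℕ, q (n + 2) = (x + (a (n + 2) : ℝ)) * q (n + 1) - x * q n) (n : ℕ) :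
    (n : ℝ) + 1 ≤ q n ∧ 1 ≤ q (n + 1) - q n := by
  have ha' : ∀ n, (1 : ℝ) ≤ a (n + 1) := fun n => by exact_mod_cast ha n
  induction n with
  | zero =>
    have h1 := ha' 0
    norm_num at h1 ⊢
    rw [hq0, hq1]
    constructor <;> linarith
  | succ n ih =>
    obtain ⟨h1, h2⟩ := ih
    have h3 := ha' (n + 1)
    have hn : (0 : ℝ) ≤ n := n.cast_nonneg
    push_cast
    refine ⟨by linarith, ?_⟩
    rw [show n + 1 + 1 = n + 2 from rfl] at h3 ⊢
    rw [hq n]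
    have h4 : 0 ≤ ((a (n + 2) : ℝ) - 1) * q (n + 1) := mul_nonneg (by linarith) (by linarith)
    have h5 : 1 ≤ x * (q (n + 1) - q n) := by nlinarith
    linarith

/-- For x ≥ 1 and t ∈ (0,1) with infinite backward x-expansion, the backward
continued-fraction convergents p_n/q_n converge to t. -/
theorem stmt17 (x : ℝ) (hx : 1 ≤ x) (t : ℝ) (ht : t ∈ Set.Ioo (0 : ℝ) 1)
    (hinf : ∀ n : ℕ, (Smap x)^[n] t ≠ 0)
    (a : ℕ → ℤ)
    (ha : ∀ n : ℕ, 1 ≤ n → a n = ⌊x / (1 - (Smap x)^[n - 1] t) - x⌋ + 1)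
    (p q : ℕ → ℝ)
    (hp0 : p 0 = 1) (hp1 : p 1 = (a 1 : ℝ)) (hq0 : q 0 = 1) (hq1 : q 1 = (a 1 : ℝ) + x)
    (hp : ∀ n : ℕ, p (n + 2) = (x + (a (n + 2) : ℝ)) * p (n + 1) - x * p n)
    (hq : ∀ n : ℕ, q (n + 2) = (x + (a (n + 2) : ℝ)) * q (n + 1) - x * q n) :
    Filter.Tendsto (fun n : ℕ => p n / q n) Filter.atTop (nhds t) := by
  obtain ⟨s, hs⟩ : ∃ s : ℕ → ℝ, ∀ n, s n = 1 - (Smap x)^[n] t := ⟨_, fun _ => rfl⟩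
  have hs_mem : ∀ n, 0 < s n ∧ s n < 1 := by
    intro n
    rw [hs]
    cases n with
    | zero => exact ⟨by simpa using ht.2, by simpa using ht.1⟩
    | succ n =>
      have h0 := hinf (n + 1)
      rw [Function.iterate_succ_apply'] at h0 ⊢
      have h1 : 0 < Smap x ((Smap x)^[n] t) := lt_of_le_of_ne (Int.fract_nonneg _) h0.symm
      have h2 : Smap x ((Smap x)^[n] t) < 1 := Int.fract_lt_one _
      constructor <;> linarith
  have ha_s : ∀ n, a (n + 1) = ⌊x / s n - x⌋ + 1 := fun n => by
    rw [ha (n + 1) (by omega), hs, Nat.add_sub_cancel]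
  have ha_pos : ∀ n, 1 ≤ a (n + 1) := fun n => by
    have h : 0 ≤ ⌊x / s n - x⌋ := Int.floor_nonneg.2 <|
      sub_nonneg.2 (le_div_self (by linarith) (hs_mem n).1 (hs_mem n).2.le)
    rw [ha_s]
    omega
  have hs_rec : ∀ n, s n * (x + a (n + 1) - s (n + 1)) = x := fun n => by
    have h : s (n + 1) = 1 - Int.fract (x / s n - x) := by
      rw [hs (n + 1), Function.iterate_succ_apply', hs n, Smap]
    have h' := Int.floor_add_fract (x / s n - x)
    have h'' : x + a (n + 1) - s (n + 1) = x / s n := by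
      rw [ha_s, h]
      push_cast
      linarith
    rw [h'', mul_div_cancel₀ _ (hs_mem n).1.ne']
  have hs0 : s 0 = 1 - t := hs 0
  have hD : ∀ n, t * q (n + 1) - p (n + 1) = s (n + 1) * (t * q n - p n) := by
    intro n
    induction n with
    | zero =>
      have h := hs_rec 0
      rw [zero_add, hs0] at h
      rw [zero_add, hq1, hp1, hq0, hp0]
      linear_combination -h
    | succ n ih =>
      have h := hs_rec (n + 1)
      rw [show n + 1 + 1 = n + 2 from rfl] at h ⊢
      rw [hq, hp]
      linear_combination (x + a (n + 2) - s (n + 2)) * ih + (t * q n - p n) * h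
  have hD_le : ∀ n, |t * q n - p n| ≤ 1 := by
    intro n
    induction n with
    | zero =>
      rw [hq0, hp0, abs_le]
      constructor <;> linarith [ht.1, ht.2]
    | succ n ih =>
      rw [hD, abs_mul, abs_of_pos (hs_mem _).1]
      exact mul_le_one₀ (hs_mem _).2.le (abs_nonneg _) ih
  rw [tendsto_iff_dist_tendsto_zero]
  refine squeeze_zero (fun _ => dist_nonneg) (fun n => ?_) tendsto_one_div_add_atTop_nhds_zero_nat
  have hqn := (denominators_grow hx ha_pos hq0 hq1 hq n).1
  have hn : (0 : ℝ) < (n : ℝ) + 1 := n.cast_add_one_pos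
  have hq_pos : 0 < q n := hn.trans_le hqn
  rw [dist_comm, Real.dist_eq, show t - p n / q n = (t * q n - p n) / q n by field_simp,
    abs_div, abs_of_pos hq_pos]
  exact div_le_div₀ zero_le_one (hD_le n) hn hqn
end
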